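/- Let Ω ⊂ ℝ^d be a bounded, connected, open set admitting the relative isoperimetric inequality, let (A, m) be an admissible pair of C¹ coefficients with constant κ, and let p ≥ 1. Let U ⊆ C¹(Ω̄; ℝ^N) be a set of functions such that: (i) u ≥ 0 on Ω for every u ∈ U; (ii) there is no sequence (u_n) ⊆ U that is bounded in L^p(Ω; ℝ^N) and no nonempty index set I ⊆ {1,…,N} such that u_{in} → 0 in measure on Ω for every i ∈ I and f_{in} → 0 in measure on Ω for every i ∉ I, where f_{in}(x) = m_i(x) − Σ_{j=1}^N a_{ij}(x) u_{jn}(x). Then there exists C > 0 such that for every u ∈ U one has ∫_Ω Σ_{i=1}^N |f_i(x)|^p dx ≤ C ∫_Ω Σ_{i=1}^N u_i(x) (|f_i(x)|^p + |∇f_i(x)|^p) dx, where f_i(x) = m_i(x) − Σ_{j=1}^N a_{ij}(x) u_j(x), ∇f_i is its classical gradient, and the right-hand side is allowed to be infinite. -/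

import Mathlib

/-!
A matrix with positive principal minors reverses the sign of no nonzero vector (Fiedler–Pták).
Applied to `A` with its `j`-th column replaced by `m`, this shows that `f = m - A u` satisfies
`f j > 0` whenever `u j = 0`, provided all products `u i * f i` are nonnegative. Admissible pairs
form a compact set, so this holds quantitatively: at points of small energy density each `f j` is
either close to zero or bounded below, while on the boundary of the region where exactly the
`f j`, `j ∈ K`, are close to zero, some `u j` is bounded below. By Eilenberg's inequality the area
of that boundary, averaged over the threshold defining "close", is bounded by the energy; by
isoperimetry, so is the measure of the region or of its complement.

If for some `K` other than the full index set the complement is the small one, the energy is bounded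
below, since otherwise a sequence in `U` would violate the separation hypothesis. If all the regions
are small, then so is `Ω`, up to the set of large energy density. In the remaining case all `f j`
are close to zero, and hence all `u j` bounded below, outside a set of measure at most a multiple of
the energy, and the inequality follows by integrating pointwise bounds.
-/

open MeasureTheory Filter

/-- Principal minor of `A` over the index set `I`. -/
noncomputable def minorP {N : ℕ} (A : Matrix (Fin N) (Fin N) ℝ) (I : Finset (Fin N)) : ℝ :=
  Matrix.det (Matrix.of fun i j : {x : Fin N // x ∈ I} => A i.1 j.1)

/-- The determinant `Δ_{I,j}` obtained by bordering the principal minor over `I`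
with the column `m` and the row `j`. -/
noncomputable def minorM {N : ℕ} (A : Matrix (Fin N) (Fin N) ℝ) (m : Fin N → ℝ)
    (I : Finset (Fin N)) (j : Fin N) : ℝ :=
  Matrix.det (Matrix.of fun k l : Option {x : Fin N // x ∈ I} =>
    match k, l with
    | some k', some l' => A k'.1 l'.1
    | some k', none => m k'.1
    | none, some l' => A j l'.1
    | none, none => m j)

/-- An admissible pair of coefficients with constant `κ`:
entries of `A` and `m` bounded by `1/κ`, all principal minors `Δ_I ≥ κ`,
and all bordered determinants `Δ_{I,j} ≥ κ` for `j ∉ I`. -/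
def IsAdmissible {N : ℕ} (κ : ℝ) (A : Matrix (Fin N) (Fin N) ℝ) (m : Fin N → ℝ) : Prop :=
  (∀ i j, |A i j| ≤ 1 / κ) ∧ (∀ i, m i ≤ 1 / κ) ∧
    (∀ I : Finset (Fin N), κ ≤ minorP A I) ∧
    (∀ I : Finset (Fin N), ∀ j ∉ I, κ ≤ minorM A m I j)

/-- `f_i(u) = m_i − Σ_j a_{ij} u_j`. -/
def fComp {N : ℕ} (A : Matrix (Fin N) (Fin N) ℝ) (m : Fin N → ℝ) (u : Fin N → ℝ)
    (i : Fin N) : ℝ :=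
  m i - ∑ j, A i j * u j

open Set Module
open scoped ENNReal NNReal Topology

/-! ### P-matrices -/

section PMatrix

variable {ι R : Type*} [Fintype ι] [DecidableEq ι]

lemma det_ite_mem_row_single [CommRing R] (P : Matrix ι ι R) (T : Finset ι) :
    Matrix.det (Matrix.of fun i => if i ∈ T then P i else Pi.single i 1) =
      (P.submatrix (Subtype.val : T → ι) Subtype.val).det := by
  set B : Matrix ι ι R := Matrix.of fun i => if i ∈ T then P i else Pi.single i 1
  have hlower : ∀ i ∉ T, ∀ j ∈ T, B i j = 0 := by
    intro i hi j hj
    simp [B, hi, ne_of_mem_of_not_mem hj hi]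
  have hupper : B.toSquareBlockProp (· ∈ T) = P.submatrix Subtype.val Subtype.val := by
    ext i j
    simp [B, Matrix.toSquareBlockProp, i.2]
  have hone : B.toSquareBlockProp (· ∉ T) = 1 := by
    ext i j
    simp [B, Matrix.toSquareBlockProp, i.2, Matrix.one_apply, Pi.single_apply, Subtype.ext_iff,
      eq_comm]
  rw [Matrix.twoBlockTriangular_det B (· ∈ T) hlower, hone, Matrix.det_one, mul_one, hupper]
  congr!

lemma det_diagonal_mul_add_diagonal [CommRing R] (P : Matrix ι ι R) (α β : ι → R) :
    (Matrix.diagonal α * P + Matrix.diagonal β).det =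
      ∑ T : Finset ι, (∏ i, if i ∈ T then α i else β i) *
        (P.submatrix (Subtype.val : T → ι) Subtype.val).det := by
  have hrows : Matrix.diagonal α * P + Matrix.diagonal β =
      Matrix.of fun i => α i • P i + β i • Pi.single i 1 := by
    ext i j
    simp [Matrix.diagonal_apply, Pi.single_apply, eq_comm]
  rw [hrows]
  refine (Matrix.detRowAlternating.toMultilinearMap.map_add_univ (fun i => α i • P i)
    fun i => β i • Pi.single i 1).trans (Finset.sum_congr rfl fun T _ => ?_)
  rw [← det_ite_mem_row_single]
  refine Eq.trans (congrArg _ ?_) (Matrix.detRowAlternating.toMultilinearMap.map_smul_univ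
    (fun i => if i ∈ T then α i else β i) fun i => if i ∈ T then P i else Pi.single i 1)
  ext i : 1
  by_cases hi : i ∈ T <;> simp [hi]

variable [CommRing R] [LinearOrder R]

/-- A P-matrix: a square matrix all of whose principal minors are positive. -/
def IsPMatrix (P : Matrix ι ι R) : Prop :=
  ∀ T : Finset ι, 0 < (P.submatrix (Subtype.val : T → ι) Subtype.val).det

namespace IsPMatrix

variable [IsStrictOrderedRing R] {P : Matrix ι ι R}

lemma det_diagonal_mul_add_diagonal_pos (hP : IsPMatrix P) {α β : ι → R} (hα : 0 ≤ α) (hβ : 0 ≤ β)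
    (hαβ : ∀ i, 0 < α i ∨ 0 < β i) : 0 < (Matrix.diagonal α * P + Matrix.diagonal β).det := by
  rw [det_diagonal_mul_add_diagonal]
  have hcoeff (T : Finset ι) (i : ι) : 0 ≤ if i ∈ T then α i else β i := by
    split_ifs
    exacts [hα i, hβ i]
  refine Finset.sum_pos' (fun T _ => mul_nonneg (Finset.prod_nonneg fun i _ => hcoeff T i)
    (hP T).le) ⟨({i | 0 < α i} : Finset ι), Finset.mem_univ _,
      mul_pos (Finset.prod_pos fun i _ => ?_) (hP _)⟩
  by_cases hi : 0 < α i
  · simp [hi]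
  · simpa [hi] using (hαβ i).resolve_left hi

/-- The Fiedler–Pták theorem: a P-matrix reverses the sign of no nonzero vector. -/
theorem eq_zero_of_mul_mulVec_nonpos (hP : IsPMatrix P) {z : ι → R}
    (hz : ∀ i, z i * P.mulVec z i ≤ 0) : z = 0 := by
  by_contra hne
  let α : ι → R := fun i => |z i|
  let β : ι → R := fun i => if z i = 0 then 1 else |P.mulVec z i|
  have hβ : 0 ≤ β := fun i => by
    dsimp only [β, Pi.zero_apply]
    split_ifs
    exacts [zero_le_one, abs_nonneg _]
  have hαβ (i : ι) : 0 < α i ∨ 0 < β i := by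
    by_cases hi : z i = 0 <;> simp [α, β, hi]
  have hker : (Matrix.diagonal α * P + Matrix.diagonal β).mulVec z = 0 := by
    ext i
    rw [Matrix.add_mulVec, ← Matrix.mulVec_mulVec]
    simp only [Pi.add_apply, Matrix.mulVec_diagonal, Pi.zero_apply, α, β]
    rcases lt_trichotomy (z i) 0 with hi | hi | hi
    · rw [if_neg hi.ne, abs_of_neg hi, abs_of_nonneg (by nlinarith [hz i])]
      ring
    · simp [hi]
    · rw [if_neg hi.ne', abs_of_pos hi, abs_of_nonpos (by nlinarith [hz i])]
      ring
  exact (hP.det_diagonal_mul_add_diagonal_pos (fun i => abs_nonneg (z i)) hβ hαβ).ne'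
    (Matrix.exists_mulVec_eq_zero_iff.1 ⟨z, hne, hker⟩)

end IsPMatrix

end PMatrix

namespace IsAdmissible

variable {N : ℕ} {κ : ℝ} {A : Matrix (Fin N) (Fin N) ℝ} {m : Fin N → ℝ}

lemma isPMatrix (hκ : 0 < κ) (h : IsAdmissible κ A m) : IsPMatrix A :=
  fun T => hκ.trans_le (h.2.2.1 T)

lemma isPMatrix_updateCol (hκ : 0 < κ) (h : IsAdmissible κ A m) (j : Fin N) :
    IsPMatrix (A.updateCol j m) := by
  intro T
  by_cases hj : j ∈ T
  · have hjT : j ∉ T.erase j := Finset.notMem_erase j T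
    let e : Option (T.erase j) ≃ T := (Finset.subtypeInsertEquivOption hjT).symm.trans
      (Equiv.subtypeEquivRight fun i => by rw [Finset.insert_erase hj])
    have hborder : ((A.updateCol j m).submatrix (Subtype.val : T → Fin N) Subtype.val).det =
        minorM A m (T.erase j) j := by
      rw [← Matrix.det_submatrix_equiv_self e]
      unfold minorM
      congr 1
      ext k l
      have hl (l : T.erase j) : (l : Fin N) ≠ j := ne_of_mem_of_not_mem l.2 hjT
      rcases k with _ | k <;> rcases l with _ | l <;>
        simp [e, Finset.subtypeInsertEquivOption, hl]
    rw [hborder]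
    exact hκ.trans_le (h.2.2.2 _ j hjT)
  · have hsub : (A.updateCol j m).submatrix (Subtype.val : T → Fin N) (Subtype.val : T → Fin N) =
        A.submatrix Subtype.val Subtype.val := by
      ext k l
      exact Matrix.updateCol_ne (ne_of_mem_of_not_mem l.2 hj)
    rw [hsub]
    exact h.isPMatrix hκ T

/-- This is where the bordered determinants enter: otherwise `A.updateCol j m` would reverse the
sign of the vector obtained from `-u` by setting its `j`-th entry to `1`. -/
lemma fComp_pos (hκ : 0 < κ) (h : IsAdmissible κ A m) {u : Fin N → ℝ}
    (huf : ∀ i, 0 ≤ u i * fComp A m u i) {j : Fin N} (hj : u j = 0) : 0 < fComp A m u j := by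
  by_contra! hf
  let z : Fin N → ℝ := Function.update (-u) j 1
  have hAz : (A.updateCol j m).mulVec z = fComp A m u := by
    ext i
    have hterm (k : Fin N) : A.updateCol j m i k * z k =
        (if k = j then m i else 0) - A i k * u k := by
      by_cases hk : k = j
      · simp [z, hk, hj]
      · simp [z, hk]
    simp [Matrix.mulVec, dotProduct, hterm, fComp]
  have hz : z = 0 := (h.isPMatrix_updateCol hκ j).eq_zero_of_mul_mulVec_nonpos fun i => by
    rw [hAz]
    by_cases hi : i = j
    · simpa [z, hi] using hf
    · simpa [z, hi] using huf i
  simpa [z] using congrFun hz j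

end IsAdmissible

/-! ### Bounds uniform over admissible coefficients -/

section Compactness

variable {X ι : Type*} [TopologicalSpace X] [Finite ι] {K : Set X}

lemma exists_pos_forall_le_of_isCompact (hK : IsCompact K) {g : ι → X → ℝ}
    (hg : ∀ i, ContinuousOn (g i) K) (hpos : ∀ i, ∀ x ∈ K, 0 < g i x) :
    ∃ c, 0 < c ∧ ∀ i, ∀ x ∈ K, c ≤ g i x := by
  choose c hc hcg using fun i => hK.exists_forall_le' (hg i) (hpos i)
  cases isEmpty_or_nonempty ι
  · exact ⟨1, one_pos, isEmptyElim⟩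
  · obtain ⟨i₀, hi₀⟩ := Finite.exists_min c
    exact ⟨c i₀, hc i₀, fun i x hx => (hi₀ i).trans (hcg i x hx)⟩

end Compactness

section UniformBounds

variable {N : ℕ} {κ p : ℝ}

lemma fComp_eq_sub_mulVec (A : Matrix (Fin N) (Fin N) ℝ) (m u : Fin N → ℝ) (i : Fin N) :
    fComp A m u i = m i - A.mulVec u i :=
  rfl

@[fun_prop]
lemma continuous_fComp (i : Fin N) :
    Continuous fun q : (Matrix (Fin N) (Fin N) ℝ × (Fin N → ℝ)) × (Fin N → ℝ) =>
      fComp q.1.1 q.1.2 q.2 i := by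
  unfold fComp
  fun_prop

namespace IsAdmissible

variable {A : Matrix (Fin N) (Fin N) ℝ} {m u : Fin N → ℝ}

lemma m_pos (hκ : 0 < κ) (h : IsAdmissible κ A m) (i : Fin N) : 0 < m i := by
  simpa [fComp] using h.fComp_pos hκ (u := 0) (fun i => by simp) (j := i) rfl

lemma abs_mulVec_le (h : IsAdmissible κ A m) (hu : 0 ≤ u) (i : Fin N) :
    |A.mulVec u i| ≤ (∑ j, u j) / κ := by
  rw [Finset.sum_div]
  refine (Finset.abs_sum_le_sum_abs (fun j => A i j * u j) Finset.univ).trans ?_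
  refine Finset.sum_le_sum fun j _ => ?_
  rw [abs_mul, abs_of_nonneg (hu j), div_eq_mul_one_div, mul_comm]
  exact mul_le_mul_of_nonneg_left (h.1 i j) (hu j)

lemma abs_fComp_le (hκ : 0 < κ) (h : IsAdmissible κ A m) (hu : 0 ≤ u) (i : Fin N) :
    |fComp A m u i| ≤ (1 + ∑ j, u j) / κ := by
  rw [fComp_eq_sub_mulVec, add_div]
  refine (abs_sub _ _).trans (add_le_add ?_ (h.abs_mulVec_le hu i))
  exact (abs_of_pos (h.m_pos hκ i)).trans_le (h.2.1 i)

end IsAdmissible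

lemma isCompact_setOf_isAdmissible (hκ : 0 < κ) :
    IsCompact {q : Matrix (Fin N) (Fin N) ℝ × (Fin N → ℝ) | IsAdmissible κ q.1 q.2} := by
  let box : Set (Matrix (Fin N) (Fin N) ℝ × (Fin N → ℝ)) :=
    (univ.pi fun _ => univ.pi fun _ => Icc (-(1 / κ)) (1 / κ)) ×ˢ univ.pi fun _ => Icc 0 (1 / κ)
  have hbox : IsCompact box :=
    (isCompact_univ_pi fun _ => isCompact_univ_pi fun _ => isCompact_Icc).prod
      (isCompact_univ_pi fun _ => isCompact_Icc)
  refine hbox.of_isClosed_subset ?_ fun q hq => ?_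
  · simp only [IsAdmissible, ofPred_and, ofPred_forall]
    refine .inter ?_ (.inter ?_ (.inter ?_ ?_))
    · exact isClosed_iInter fun i => isClosed_iInter fun j =>
        isClosed_le (by fun_prop) continuous_const
    · exact isClosed_iInter fun i => isClosed_le (by fun_prop) continuous_const
    · refine isClosed_iInter fun I => isClosed_le continuous_const (Continuous.matrix_det ?_)
      exact continuous_matrix fun i j => by dsimp; fun_prop
    · refine isClosed_iInter fun I => isClosed_iInter fun j => isClosed_iInter fun _ =>
        isClosed_le continuous_const (Continuous.matrix_det (continuous_matrix fun k l => ?_))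
      rcases k with _ | k <;> rcases l with _ | l <;> dsimp <;> fun_prop
  · exact ⟨fun i _ j _ => abs_le.1 (hq.1 i j), fun i _ => ⟨(hq.m_pos hκ i).le, hq.2.1 i⟩⟩

/-- Compactness of the simplex turns the Fiedler–Pták theorem into a quantitative bound, which
extends to the whole orthant by homogeneity. -/
lemma exists_mul_sum_sq_le_mul_mulVec (hκ : 0 < κ) :
    ∃ α, 0 < α ∧ ∀ (A : Matrix (Fin N) (Fin N) ℝ) (m u : Fin N → ℝ), IsAdmissible κ A m → 0 ≤ u →
      0 < ∑ j, u j → ∃ i, α * (∑ j, u j) ^ 2 ≤ u i * A.mulVec u i := by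
  rcases isEmpty_or_nonempty (Fin N) with hN | hN
  · exact ⟨1, one_pos, fun A m u _ _ hpos => by simp at hpos⟩
  let g : (Matrix (Fin N) (Fin N) ℝ × (Fin N → ℝ)) × (Fin N → ℝ) → ℝ := fun q =>
    Finset.univ.sup' Finset.univ_nonempty fun i => q.2 i * q.1.1.mulVec q.2 i
  have hg : Continuous g := .finset_sup'_apply _ fun i _ => by
    simp only [Matrix.mulVec, dotProduct]
    fun_prop
  obtain ⟨α, hα, hαg⟩ := ((isCompact_setOf_isAdmissible hκ).prod
    (isCompact_stdSimplex ℝ (Fin N))).exists_forall_le' hg.continuousOn (a := 0) (by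
      rintro ⟨⟨A, m⟩, w⟩ ⟨hAm, hw⟩
      by_contra! hle
      have hw0 : w = 0 := (IsAdmissible.isPMatrix hκ hAm).eq_zero_of_mul_mulVec_nonpos fun i =>
        (Finset.sup'_le_iff _ _).1 hle i (Finset.mem_univ i)
      simpa [hw0] using hw.2)
  refine ⟨α, hα, fun A m u hAm hu hs => ?_⟩
  set s := ∑ j, u j
  have hmem : s⁻¹ • u ∈ stdSimplex ℝ (Fin N) :=
    ⟨fun j => mul_nonneg (inv_nonneg.2 hs.le) (hu j), by
      simpa [← Finset.mul_sum] using inv_mul_cancel₀ hs.ne'⟩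
  obtain ⟨i, -, hi⟩ := (Finset.le_sup'_iff _).1 (hαg ⟨(A, m), s⁻¹ • u⟩ ⟨hAm, hmem⟩)
  refine ⟨i, ?_⟩
  calc α * s ^ 2 ≤ (s⁻¹ • u) i * A.mulVec (s⁻¹ • u) i * s ^ 2 := by gcongr
    _ = u i * A.mulVec u i := by
      rw [Matrix.mulVec_smul, Pi.smul_apply, Pi.smul_apply, smul_eq_mul, smul_eq_mul]
      field_simp

/-- Once `∑ u` is large, the quadratic growth of `u i * (A u) i` dominates the bounded term `m`. -/
lemma exists_fComp_le_neg_of_le_sum (hκ : 0 < κ) :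
    ∃ R β, 1 ≤ R ∧ 0 < β ∧ ∀ (A : Matrix (Fin N) (Fin N) ℝ) (m u : Fin N → ℝ), IsAdmissible κ A m →
      0 ≤ u → R ≤ ∑ j, u j → ∃ i, fComp A m u i ≤ -(β * ∑ j, u j) ∧ β ≤ u i := by
  obtain ⟨α, hα, hcoercive⟩ := exists_mul_sum_sq_le_mul_mulVec (N := N) hκ
  refine ⟨max 1 (2 / (κ * α)), min (α / 2) (α * κ), le_max_left _ _, by positivity,
    fun A m u hAm hu hR => ?_⟩
  set s := ∑ j, u j
  obtain ⟨hs1, hsκ⟩ := max_le_iff.1 hR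
  have hs : 0 < s := one_pos.trans_le hs1
  obtain ⟨i, hi⟩ := hcoercive A m u hAm hu hs
  have hus : u i ≤ s := Finset.single_le_sum (fun j _ => hu j) (Finset.mem_univ i)
  have hAu : A.mulVec u i ≤ s / κ := (le_abs_self _).trans (hAm.abs_mulVec_le hu i)
  have hAu_pos : 0 < A.mulVec u i :=
    pos_of_mul_pos_right ((by positivity : 0 < α * s ^ 2).trans_le hi) (hu i)
  refine ⟨i, ?_, (min_le_right _ _).trans ?_⟩
  · have hlower : α * s ≤ A.mulVec u i := by
      refine le_of_mul_le_mul_left (?_ : s * (α * s) ≤ s * A.mulVec u i) hs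
      nlinarith
    have hm : m i ≤ α * s / 2 := (hAm.2.1 i).trans (by
      rw [div_le_iff₀ (by positivity)] at hsκ ⊢
      linarith)
    have hβ : min (α / 2) (α * κ) * s ≤ α / 2 * s := by
      gcongr
      exact min_le_left _ _
    rw [fComp_eq_sub_mulVec]
    linarith
  · have hupper : α * s ^ 2 * κ ≤ u i * s := by
      rw [← le_div_iff₀ hκ, mul_div_assoc]
      exact hi.trans (mul_le_mul_of_nonneg_left hAu (hu i))
    refine le_of_mul_le_mul_right (?_ : α * κ * s ≤ u i * s) hs
    nlinarith [mul_le_mul_of_nonneg_left hs1 (by positivity : 0 ≤ α * κ * s)]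

/-- The uniform pointwise facts about `f = m - A u` that the integral estimates rest on: if all
`f i` are almost nonnegative, `f j` and `u j` are not both small; if `∑ u i |f i| ^ p` is small,
each `f j` is either close to zero or bounded below; and that sum controls the growth of `f` and
`u`. -/
structure IsControlled {ι : Type*} [Fintype ι] (p c δ M : ℝ) (u f : ι → ℝ) : Prop where
  nonneg : 0 ≤ u
  le_of_lt : (∀ i, -c < f i) → ∀ j, f j < c → c ≤ u j
  dichotomy : ∑ i, u i * |f i| ^ p < δ → ∀ j, |f j| < c / 2 ∨ c < f j
  sum_abs_rpow_le_left : ∑ i, |u i| ^ p ≤ M * (1 + ∑ i, u i * |f i| ^ p)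
  sum_abs_rpow_le_right : ∑ i, |f i| ^ p ≤ M * (1 + ∑ i, u i * |f i| ^ p)

lemma sum_mul_abs_rpow_nonneg {ι : Type*} [Fintype ι] {u : ι → ℝ} (hu : 0 ≤ u) (f : ι → ℝ) :
    0 ≤ ∑ i, u i * |f i| ^ p :=
  Finset.sum_nonneg fun i _ => mul_nonneg (hu i) (by positivity)

lemma eq_zero_or_eq_zero_of_sum_mul_abs_rpow_nonpos {ι : Type*} [Fintype ι] (hp : p ≠ 0)
    {u f : ι → ℝ} (hu : 0 ≤ u) (h : ∑ i, u i * |f i| ^ p ≤ 0) (i : ι) : u i = 0 ∨ f i = 0 := by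
  have hi := (Finset.sum_eq_zero_iff_of_nonneg fun i _ => mul_nonneg (hu i) (by positivity)).1
    (h.antisymm (sum_mul_abs_rpow_nonneg hu f)) i (Finset.mem_univ i)
  simpa [Real.rpow_eq_zero (abs_nonneg _) hp] using hi

lemma sum_abs_rpow_le {ι : Type*} [Fintype ι] (hp : 0 ≤ p) {v : ι → ℝ} {b : ℝ}
    (hb : ∀ i, |v i| ≤ b) : ∑ i, |v i| ^ p ≤ Fintype.card ι * b ^ p := by
  simpa using Finset.sum_le_card_nsmul Finset.univ (fun i => |v i| ^ p) (b ^ p) fun i _ =>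
    Real.rpow_le_rpow (abs_nonneg _) (hb i) hp

lemma exists_le_left_of_fComp_lt (hκ : 0 < κ) :
    ∃ c, 0 < c ∧ ∀ (A : Matrix (Fin N) (Fin N) ℝ) (m u : Fin N → ℝ), IsAdmissible κ A m → 0 ≤ u →
      (∀ i, -c < fComp A m u i) → ∀ j, fComp A m u j < c → c ≤ u j := by
  obtain ⟨R, β, hR, hβ, hlarge⟩ := exists_fComp_le_neg_of_le_sum (N := N) hκ
  let g : Fin N → (Matrix (Fin N) (Fin N) ℝ × (Fin N → ℝ)) × (Fin N → ℝ) → ℝ := fun j q =>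
    max (max (q.2 j) (fComp q.1.1 q.1.2 q.2 j))
      (Finset.univ.sup' ⟨j, Finset.mem_univ j⟩ fun i => -fComp q.1.1 q.1.2 q.2 i)
  have hg (j : Fin N) : Continuous (g j) := by
    exact .max (by fun_prop) (.finset_sup'_apply _ fun i _ => by fun_prop)
  obtain ⟨c, hc, hcg⟩ := exists_pos_forall_le_of_isCompact
    ((isCompact_setOf_isAdmissible hκ).prod
      (isCompact_Icc (a := (0 : Fin N → ℝ)) (b := fun _ => R)))
    (fun j => (hg j).continuousOn) (by
      rintro j ⟨⟨A, m⟩, u⟩ ⟨hAm, hu⟩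
      by_contra! hle
      obtain ⟨hujf, hf⟩ := max_le_iff.1 hle
      obtain ⟨huj, hfj⟩ := max_le_iff.1 hujf
      exact hfj.not_gt (IsAdmissible.fComp_pos hκ hAm (fun i => mul_nonneg (hu.1 i)
        (neg_nonpos.1 ((Finset.sup'_le_iff _ _).1 hf i (Finset.mem_univ i))))
        (huj.antisymm (hu.1 j))))
  refine ⟨min c β, by positivity, fun A m u hAm hu hf j hj => ?_⟩
  rcases le_total R (∑ k, u k) with hs | hs
  · obtain ⟨i, hi, -⟩ := hlarge A m u hAm hu hs
    nlinarith [hf i, min_le_right c β]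
  · have huR (k : Fin N) : u k ≤ R :=
      (Finset.single_le_sum (fun l _ => hu l) (Finset.mem_univ k)).trans hs
    rcases le_max_iff.1 (hcg j ((A, m), u) ⟨hAm, hu, huR⟩) with h | h
    · rcases le_max_iff.1 h with h | h
      · exact (min_le_left _ _).trans h
      · exact absurd (hj.trans_le ((min_le_left _ _).trans h)) (lt_irrefl _)
    · obtain ⟨i, -, hi⟩ := (Finset.le_sup'_iff _).1 h
      linarith [hf i, min_le_left c β]

lemma exists_rpow_sum_le_sum_mul_abs_rpow (hκ : 0 < κ) (hp : 0 ≤ p) :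
    ∃ R γ, 1 ≤ R ∧ 0 < γ ∧ ∀ (A : Matrix (Fin N) (Fin N) ℝ) (m u : Fin N → ℝ), IsAdmissible κ A m →
      0 ≤ u → R ≤ ∑ j, u j → γ * (∑ j, u j) ^ p ≤ ∑ i, u i * |fComp A m u i| ^ p := by
  obtain ⟨R, β, hR, hβ, hlarge⟩ := exists_fComp_le_neg_of_le_sum (N := N) hκ
  refine ⟨R, β * β ^ p, hR, by positivity, fun A m u hAm hu hs => ?_⟩
  obtain ⟨i, hfi, hui⟩ := hlarge A m u hAm hu hs
  set s := ∑ j, u j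
  have hs0 : 0 ≤ s := zero_le_one.trans (hR.trans hs)
  calc β * β ^ p * s ^ p = β * (β * s) ^ p := by rw [Real.mul_rpow hβ.le hs0, mul_assoc]
    _ ≤ u i * |fComp A m u i| ^ p := by
      have : β * s ≤ |fComp A m u i| := (le_neg.1 hfi).trans (neg_le_abs _)
      have := hu i
      gcongr
    _ ≤ ∑ i, u i * |fComp A m u i| ^ p := Finset.single_le_sum
      (f := fun i => u i * |fComp A m u i| ^ p) (fun k _ => mul_nonneg (hu k) (by positivity))
      (Finset.mem_univ i)

/-- On a bounded set of `u` this is compactness: where `∑ u i |f i| ^ p = 0` every `f i` is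
nonnegative and every product `u i * f i` vanishes, so `f j = 0` or `u j = 0`. -/
lemma exists_dichotomy (hκ : 0 < κ) (hp : 0 < p) {b c : ℝ} (hb : 0 < b) (hbc : b < c)
    (hc : ∀ (A : Matrix (Fin N) (Fin N) ℝ) (m u : Fin N → ℝ), IsAdmissible κ A m → 0 ≤ u →
      (∀ i, -c < fComp A m u i) → ∀ j, fComp A m u j < c → c ≤ u j) :
    ∃ δ, 0 < δ ∧ ∀ (A : Matrix (Fin N) (Fin N) ℝ) (m u : Fin N → ℝ), IsAdmissible κ A m → 0 ≤ u →
      ∑ i, u i * |fComp A m u i| ^ p < δ → ∀ j, |fComp A m u j| < b / 2 ∨ b < fComp A m u j := by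
  obtain ⟨R, γ, hR, hγ, hlarge⟩ := exists_rpow_sum_le_sum_mul_abs_rpow (N := N) hκ hp.le
  let g : Fin N → (Matrix (Fin N) (Fin N) ℝ × (Fin N → ℝ)) × (Fin N → ℝ) → ℝ := fun j q =>
    max (∑ i, q.2 i * |fComp q.1.1 q.1.2 q.2 i| ^ p)
      (max (b / 2 - |fComp q.1.1 q.1.2 q.2 j|) (fComp q.1.1 q.1.2 q.2 j - b))
  have hg (j : Fin N) : Continuous (g j) :=
    .max (continuous_finsetSum _ fun i _ => .mul (by fun_prop)
      (.rpow_const (by fun_prop) fun _ => .inr hp.le)) (by fun_prop)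
  obtain ⟨δ, hδ, hδg⟩ := exists_pos_forall_le_of_isCompact
    ((isCompact_setOf_isAdmissible hκ).prod
      (isCompact_Icc (a := (0 : Fin N → ℝ)) (b := fun _ => R)))
    (fun j => (hg j).continuousOn) (by
      rintro j ⟨⟨A, m⟩, u⟩ ⟨hAm, hu⟩
      by_contra! hle
      obtain ⟨hsum, hfb, hfj⟩ := by simpa only [g, max_le_iff, sub_nonpos] using hle
      have huf := eq_zero_or_eq_zero_of_sum_mul_abs_rpow_nonpos hp.ne' hu.1 hsum
      have hf (i : Fin N) : 0 ≤ fComp A m u i := (huf i).elim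
        (fun hui => (IsAdmissible.fComp_pos hκ hAm (fun k => (mul_eq_zero.2 (huf k)).ge) hui).le)
        Eq.ge
      have huj := hc A m u hAm hu.1 (fun i => by linarith [hf i]) j (by linarith)
      rcases huf j with h | h
      · linarith
      · rw [h, abs_zero] at hfb
        linarith)
  refine ⟨min δ γ, by positivity, fun A m u hAm hu hlt j => ?_⟩
  rcases le_total R (∑ k, u k) with hs | hs
  · have := hlarge A m u hAm hu hs
    have := le_mul_of_one_le_right hγ.le (Real.one_le_rpow (hR.trans hs) hp.le)
    linarith [min_le_right δ γ]
  · have huR (k : Fin N) : u k ≤ R :=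
      (Finset.single_le_sum (fun l _ => hu l) (Finset.mem_univ k)).trans hs
    rcases le_max_iff.1 (hδg j ((A, m), u) ⟨hAm, hu, huR⟩) with h | h
    · exact absurd (hlt.trans_le ((min_le_left _ _).trans h)) (lt_irrefl _)
    · rcases le_max_iff.1 h with h | h
      · exact .inl (by linarith)
      · exact .inr (by linarith)

lemma exists_rpow_one_add_sum_le (hκ : 0 < κ) (hp : 0 ≤ p) :
    ∃ L, 0 ≤ L ∧ ∀ (A : Matrix (Fin N) (Fin N) ℝ) (m u : Fin N → ℝ), IsAdmissible κ A m → 0 ≤ u →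
      (1 + ∑ j, u j) ^ p ≤ L * (1 + ∑ i, u i * |fComp A m u i| ^ p) := by
  obtain ⟨R, γ, hR, hγ, hlarge⟩ := exists_rpow_sum_le_sum_mul_abs_rpow (N := N) hκ hp
  refine ⟨max ((1 + R) ^ p) (2 ^ p / γ), by positivity, fun A m u hAm hu => ?_⟩
  set G := ∑ i, u i * |fComp A m u i| ^ p
  have hG : 0 ≤ G := sum_mul_abs_rpow_nonneg hu _
  set s := ∑ j, u j
  have hs0 : 0 ≤ s := Finset.sum_nonneg fun j _ => hu j
  rcases le_total R s with hs | hs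
  · calc (1 + s) ^ p ≤ (2 * s) ^ p := by gcongr; linarith
      _ = 2 ^ p / γ * (γ * s ^ p) := by
        rw [Real.mul_rpow zero_le_two hs0]
        field_simp
      _ ≤ _ * (1 + G) := by
        gcongr
        · exact le_max_right _ _
        · linarith [hlarge A m u hAm hu hs]
  · calc (1 + s) ^ p ≤ (1 + R) ^ p := by gcongr
      _ ≤ _ := le_max_left _ _
      _ ≤ _ * (1 + G) := le_mul_of_one_le_right (by positivity) (by linarith)

theorem exists_isControlled (hκ : 0 < κ) (hp : 0 < p) :
    ∃ c δ M, 0 < c ∧ c ≤ 1 ∧ 0 < δ ∧ 0 ≤ M ∧ ∀ (A : Matrix (Fin N) (Fin N) ℝ) (m u : Fin N → ℝ),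
      IsAdmissible κ A m → 0 ≤ u → IsControlled p c δ M u (fComp A m u) := by
  obtain ⟨c, hc, hcf⟩ := exists_le_left_of_fComp_lt (N := N) hκ
  obtain ⟨b, hb, hbmin⟩ := exists_between (lt_min one_pos hc)
  obtain ⟨hb1, hbc⟩ := lt_min_iff.1 hbmin
  obtain ⟨δ, hδ, hδf⟩ := exists_dichotomy hκ hp hb hbc hcf
  obtain ⟨L, hL, hLf⟩ := exists_rpow_one_add_sum_le (N := N) hκ hp.le
  refine ⟨b, δ, N * (max 1 (1 / κ)) ^ p * L, hb, hb1.le, hδ, by positivity,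
    fun A m u hAm hu => ?_⟩
  have hs0 : 0 ≤ ∑ j, u j := Finset.sum_nonneg fun j _ => hu j
  have hgrowth {v : Fin N → ℝ} (hv : ∀ i, |v i| ≤ max 1 (1 / κ) * (1 + ∑ j, u j)) :
      ∑ i, |v i| ^ p ≤ N * (max 1 (1 / κ)) ^ p * L * (1 + ∑ i, u i * |fComp A m u i| ^ p) :=
    calc ∑ i, |v i| ^ p ≤ N * (max 1 (1 / κ) * (1 + ∑ j, u j)) ^ p := by
          simpa using sum_abs_rpow_le hp.le hv
      _ = N * (max 1 (1 / κ)) ^ p * (1 + ∑ j, u j) ^ p := by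
          rw [Real.mul_rpow (by positivity) (by positivity), mul_assoc]
      _ ≤ _ := by
          rw [mul_assoc _ L]
          gcongr
          exact hLf A m u hAm hu
  refine ⟨hu, fun hf j hj => ?_, hδf A m u hAm hu, hgrowth fun i => ?_, hgrowth fun i => ?_⟩
  · exact hbc.le.trans (hcf A m u hAm hu (fun i => by linarith [hf i]) j (hj.trans hbc))
  · have hui : u i ≤ ∑ j, u j := Finset.single_le_sum (fun l _ => hu l) (Finset.mem_univ i)
    rw [abs_of_nonneg (hu i)]
    exact (by linarith : u i ≤ 1 + ∑ j, u j).trans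
      (le_mul_of_one_le_left (by positivity) (le_max_left _ _))
  · refine (hAm.abs_fComp_le hκ hu i).trans ?_
    rw [div_eq_mul_one_div, mul_comm]
    gcongr
    exact le_max_right _ _

end UniformBounds

/-! ### Eilenberg's inequality -/

section Eilenberg

lemma volume_closure_image_inter_le {X : Type*} [PseudoEMetricSpace X] {s : Set X} {f : X → ℝ}
    {K : ℝ≥0} (hf : LipschitzOnWith K f s) (T : Set X) :
    volume (closure (f '' (T ∩ s))) ≤ K * Metric.ediam T :=
  calc volume (closure (f '' (T ∩ s))) ≤ Metric.ediam (f '' (T ∩ s)) :=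
        (Real.volume_le_diam _).trans_eq (Metric.ediam_closure (f '' (T ∩ s)))
    _ ≤ K * Metric.ediam T := by
        refine Metric.ediam_image_le_iff.2 fun x hx y hy => (hf hx.2 hy.2).trans ?_
        gcongr
        exact Metric.edist_le_ediam_of_mem hx.1 hy.1

variable {X : Type*} [EMetricSpace X] [MeasurableSpace X] [BorelSpace X] {s : Set X}

lemma exists_cover_tsum_ediam_rpow_le {d : ℝ} (hd : 0 < d) (hs : μH[d] s ≠ ∞) {ρ : ℝ≥0∞}
    (hρ : ρ ≠ 0) : ∃ T : ℕ → Set X, s ⊆ ⋃ i, T i ∧ (∀ i, Metric.ediam (T i) ≤ ρ) ∧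
      ∑' i, Metric.ediam (T i) ^ d ≤ μH[d] s + ρ := by
  have hlt : (⨅ (T : ℕ → Set X) (_ : s ⊆ ⋃ i, T i) (_ : ∀ i, Metric.ediam (T i) ≤ ρ),
      ∑' i, ⨆ _ : (T i).Nonempty, Metric.ediam (T i) ^ d) < μH[d] s + ρ := by
    refine lt_of_le_of_lt ?_ (ENNReal.lt_add_right hs hρ)
    rw [Measure.hausdorffMeasure_apply]
    exact le_iSup₂_of_le ρ (pos_iff_ne_zero.2 hρ) le_rfl
  simp only [iInf_lt_iff] at hlt
  obtain ⟨T, hsT, hTρ, hsum⟩ := hlt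
  refine ⟨T, hsT, hTρ, (ENNReal.tsum_le_tsum fun i => ?_).trans hsum.le⟩
  rcases (T i).eq_empty_or_nonempty with hi | hi
  · simp [hi, ENNReal.zero_rpow_of_pos hd]
  · exact le_iSup_of_le hi le_rfl

/-- A set `T i` meets the level sets of `f` only at levels in a set of length `K * ediam (T i)`, so
integrating `∑ ediam (T i) ^ r` over the levels gains one power of the diameter. -/
lemma exists_cover_lintegral_tsum_fiber_le {f : X → ℝ} {K : ℝ≥0} (hf : LipschitzOnWith K f s)
    {r : ℝ} (hr : 0 ≤ r) (hs : μH[r + 1] s ≠ ∞) {ρ : ℝ≥0∞} (hρ : ρ ≠ 0) :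
    ∃ (T : ℕ → Set X) (H : ℝ → ℝ≥0∞), s ⊆ ⋃ i, T i ∧ (∀ i, Metric.ediam (T i) ≤ ρ) ∧ Measurable H ∧
      (∀ t, ∑' i : {i | (T i ∩ (s ∩ f ⁻¹' {t})).Nonempty}, Metric.ediam (T i) ^ r ≤ H t) ∧
      ∫⁻ t, H t ≤ K * (μH[r + 1] s + ρ) := by
  obtain ⟨T, hsT, hTρ, hsum⟩ := exists_cover_tsum_ediam_rpow_le (by positivity) hs hρ
  let I : ℕ → Set ℝ := fun i => closure (f '' (T i ∩ s))
  have hI (i : ℕ) : Measurable ((I i).indicator fun _ => Metric.ediam (T i) ^ r) :=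
    measurable_const.indicator isClosed_closure.measurableSet
  refine ⟨T, fun t => ∑' i, (I i).indicator (fun _ => Metric.ediam (T i) ^ r) t, hsT, hTρ,
    .tsum hI, fun t => ?_, ?_⟩
  · have hmem (i : {i | (T i ∩ (s ∩ f ⁻¹' {t})).Nonempty}) : t ∈ I i := by
      obtain ⟨x, hxT, hxs, hxt⟩ := i.2
      exact subset_closure ⟨x, ⟨hxT, hxs⟩, hxt⟩
    calc ∑' i : {i | (T i ∩ (s ∩ f ⁻¹' {t})).Nonempty}, Metric.ediam (T i) ^ r
        = ∑' i : {i | (T i ∩ (s ∩ f ⁻¹' {t})).Nonempty},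
            (I i).indicator (fun _ => Metric.ediam (T i) ^ r) t :=
          tsum_congr fun i => by rw [indicator_of_mem (hmem i)]
      _ ≤ ∑' i, (I i).indicator (fun _ => Metric.ediam (T i) ^ r) t :=
          ENNReal.tsum_comp_le_tsum_of_injective Subtype.val_injective _
  · rw [lintegral_tsum fun i => (hI i).aemeasurable]
    calc ∑' i, ∫⁻ t, (I i).indicator (fun _ => Metric.ediam (T i) ^ r) t
        ≤ ∑' i, K * Metric.ediam (T i) ^ (r + 1) := ENNReal.tsum_le_tsum fun i => by
          rw [lintegral_indicator_const isClosed_closure.measurableSet,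
            ENNReal.rpow_add_of_nonneg _ _ hr zero_le_one, ENNReal.rpow_one, mul_left_comm]
          gcongr
          exact volume_closure_image_inter_le hf (T i)
      _ ≤ K * (μH[r + 1] s + ρ) := by
          rw [ENNReal.tsum_mul_left]
          gcongr

theorem exists_measurable_hausdorffMeasure_fiber_le {f : X → ℝ} {K : ℝ≥0}
    (hf : LipschitzOnWith K f s) (hK : K ≠ 0) {r : ℝ} (hr : 0 ≤ r) :
    ∃ h : ℝ → ℝ≥0∞, Measurable h ∧ (∀ t, μH[r] (s ∩ f ⁻¹' {t}) ≤ h t) ∧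
      ∫⁻ t, h t ≤ K * μH[r + 1] s := by
  by_cases hs : μH[r + 1] s = ∞
  · exact ⟨fun _ => ∞, measurable_const, fun _ => le_top, by simp [hs, hK]⟩
  let ρ : ℕ → ℝ≥0∞ := fun n => (n : ℝ≥0∞)⁻¹
  have hρ : Tendsto ρ atTop (𝓝 0) := ENNReal.tendsto_inv_nat_nhds_zero
  choose T H hsT hTρ hHm hH hHint using fun n => exists_cover_lintegral_tsum_fiber_le hf hr hs
    (ENNReal.inv_ne_zero.2 (ENNReal.natCast_ne_top n) : ρ n ≠ 0)
  refine ⟨fun t => liminf (fun n => H n t) atTop, .liminf hHm, fun t => ?_, ?_⟩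
  · let J : ℕ → Set ℕ := fun n => {i | (T n i ∩ (s ∩ f ⁻¹' {t})).Nonempty}
    refine (Measure.hausdorffMeasure_le_liminf_tsum r _ ρ hρ (fun n (i : J n) => T n i)
      (.of_forall fun n i => hTρ n i) (.of_forall fun n x hx => ?_)).trans
      (liminf_le_liminf (.of_forall fun n => hH n t))
    obtain ⟨i, hi⟩ := mem_iUnion.1 (hsT n hx.1)
    exact mem_iUnion.2 ⟨⟨i, x, hi, hx⟩, hi⟩
  · have hlim : Tendsto (fun n => K * (μH[r + 1] s + ρ n)) atTop (𝓝 (K * μH[r + 1] s)) := by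
      simpa using ENNReal.Tendsto.const_mul (tendsto_const_nhds.add hρ) (.inr ENNReal.coe_ne_top)
    calc ∫⁻ t, liminf (fun n => H n t) atTop ≤ liminf (fun n => ∫⁻ t, H n t) atTop :=
          lintegral_liminf_le hHm
      _ ≤ liminf (fun n => K * (μH[r + 1] s + ρ n)) atTop :=
          liminf_le_liminf (.of_forall hHint)
      _ = K * μH[r + 1] s := hlim.liminf_eq

end Eilenberg

section EilenbergDifferentiable

variable {E : Type*} [NormedAddCommGroup E] [NormedSpace ℝ E] [FiniteDimensional ℝ E] [Nontrivial E]
  [MeasurableSpace E] [BorelSpace E] {f : E → ℝ} {f' : E → E →L[ℝ] ℝ} {s : Set E}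

/-- The scalar form of `ApproximatesLinearOn.norm_fderiv_sub_le`, which is stated for maps `E → E`:
multiply by a unit vector. -/
lemma ae_nnnorm_sub_le_of_approximatesLinearOn (μ : Measure E) [μ.IsAddHaarMeasure]
    {A : E →L[ℝ] ℝ} {δ : ℝ≥0} (hfA : ApproximatesLinearOn f A s δ) (hs : MeasurableSet s)
    (hf : ∀ x ∈ s, HasFDerivWithinAt f (f' x) s x) : ∀ᵐ x ∂μ.restrict s, ‖f' x - A‖₊ ≤ δ := by
  obtain ⟨e, he⟩ := exists_norm_eq E zero_le_one
  have hfAe : ApproximatesLinearOn (fun x => f x • e) (A.smulRight e) s δ := fun x hx y hy => by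
    simpa [← sub_smul, norm_smul, he] using hfA x hx y hy
  filter_upwards [hfAe.norm_fderiv_sub_le μ hs (fun x => (f' x).smulRight e)
    fun x hx => (hf x hx).smul_const e] with x hx
  have hsub : (f' x).smulRight e - A.smulRight e = (f' x - A).smulRight e := by
    ext y
    simp [sub_smul]
  rw [hsub] at hx
  simpa [← NNReal.coe_le_coe, ContinuousLinearMap.norm_smulRight_apply, he] using hx

theorem exists_measurable_hausdorffMeasure_fiber_le_lintegral (hs : MeasurableSet s)
    (hf : ∀ x ∈ s, HasFDerivWithinAt f (f' x) s x) {ε : ℝ≥0} (hε : ε ≠ 0) :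
    ∃ h : ℝ → ℝ≥0∞, Measurable h ∧ (∀ t, μH[(finrank ℝ E : ℝ) - 1] (s ∩ f ⁻¹' {t}) ≤ h t) ∧
      ∫⁻ t, h t ≤ ∫⁻ x in s, (‖f' x‖ₑ + ε) ∂μH[finrank ℝ E] := by
  obtain ⟨T, A, hTdisj, hT, hsT, hfA, -⟩ :=
    exists_partition_approximatesLinearOn_of_hasFDerivWithinAt f s f' hf (fun _ => ε / 2)
      fun _ => (half_pos hε.bot_lt).ne'
  have hsTm (n : ℕ) : MeasurableSet (s ∩ T n) := hs.inter (hT n)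
  have hs_eq : ⋃ n, s ∩ T n = s := by rw [← inter_iUnion, inter_eq_left.2 hsT]
  have hfinrank : 0 ≤ (finrank ℝ E : ℝ) - 1 := by
    simpa using Nat.one_le_iff_ne_zero.2 (finrank_pos (R := ℝ) (M := E)).ne'
  have hlip (n : ℕ) : LipschitzOnWith (‖A n‖₊ + ε / 2) f (s ∩ T n) := by
    simpa using (A n).lipschitz.lipschitzOnWith.add (hfA n).lipschitzOnWith
  choose h hmeas hfiber hint using fun n => exists_measurable_hausdorffMeasure_fiber_le (hlip n)
    (add_pos_of_nonneg_of_pos zero_le (half_pos hε.bot_lt)).ne' hfinrank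
  refine ⟨fun t => ∑' n, h n t, .tsum hmeas, fun t => ?_, ?_⟩
  · calc μH[(finrank ℝ E : ℝ) - 1] (s ∩ f ⁻¹' {t})
        = μH[(finrank ℝ E : ℝ) - 1] (⋃ n, s ∩ T n ∩ f ⁻¹' {t}) := by
          rw [← iUnion_inter, hs_eq]
      _ ≤ ∑' n, μH[(finrank ℝ E : ℝ) - 1] (s ∩ T n ∩ f ⁻¹' {t}) := measure_iUnion_le _
      _ ≤ ∑' n, h n t := ENNReal.tsum_le_tsum fun n => hfiber n t
  · have hpiece (n : ℕ) :
        ∫⁻ t, h n t ≤ ∫⁻ x in s ∩ T n, (‖f' x‖ₑ + ε) ∂μH[finrank ℝ E] := by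
      refine (hint n).trans ?_
      rw [sub_add_cancel, ← setLIntegral_const]
      refine lintegral_mono_ae ?_
      filter_upwards [ae_nnnorm_sub_le_of_approximatesLinearOn μH[finrank ℝ E] (hfA n) (hsTm n)
        fun x hx => (hf x hx.1).mono inter_subset_left] with x hx
      have hA : ‖A n‖₊ + ε / 2 ≤ ‖f' x‖₊ + ε := by
        calc ‖A n‖₊ + ε / 2 ≤ ‖f' x‖₊ + ‖f' x - A n‖₊ + ε / 2 := by
              gcongr
              simpa using nnnorm_sub_le (f' x) (f' x - A n)
          _ ≤ ‖f' x‖₊ + ε / 2 + ε / 2 := by gcongr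
          _ = ‖f' x‖₊ + ε := by rw [add_assoc, add_halves]
      simpa [enorm_eq_nnnorm] using ENNReal.coe_le_coe.2 hA
    calc ∫⁻ t, ∑' n, h n t = ∑' n, ∫⁻ t, h n t := lintegral_tsum fun n => (hmeas n).aemeasurable
      _ ≤ ∑' n, ∫⁻ x in s ∩ T n, (‖f' x‖ₑ + ε) ∂μH[finrank ℝ E] := ENNReal.tsum_le_tsum hpiece
      _ = ∫⁻ x in s, (‖f' x‖ₑ + ε) ∂μH[finrank ℝ E] := by
        rw [← lintegral_iUnion hsTm (hTdisj.mono fun i j hij => hij.mono inter_subset_right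
          inter_subset_right), hs_eq]

end EilenbergDifferentiable

/-! ### Level regions and the energy -/

/-- The part of `Ω` where `|f i| < t` for `i ∈ K` and `f i > t` for `i ∉ K`. -/
def region {E ι : Type*} [DecidableEq ι] (Ω : Set E) (f : E → ι → ℝ) (K : Finset ι) (t : ℝ) :
    Set E :=
  {x ∈ Ω | ∀ i, f x i ∈ if i ∈ K then Ioo (-t) t else Ioi t}

section Region

variable {E ι : Type*} [DecidableEq ι] {Ω : Set E} {f : E → ι → ℝ} {K : Finset ι} {t : ℝ}

lemma region_subset : region Ω f K t ⊆ Ω :=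
  fun _ hx => hx.1

lemma abs_lt_of_mem_region {x : E} (hx : x ∈ region Ω f K t) {i : ι} (hi : i ∈ K) :
    |f x i| < t := by
  simpa [hi, abs_lt] using hx.2 i

lemma lt_of_mem_region {x : E} (hx : x ∈ region Ω f K t) {i : ι} (hi : i ∉ K) : t < f x i := by
  simpa [hi] using hx.2 i

variable [TopologicalSpace E] [Finite ι]

lemma isOpen_region (hΩ : IsOpen Ω) (hf : ContinuousOn f Ω) : IsOpen (region Ω f K t) := by
  have hopen : IsOpen (univ.pi fun i => if i ∈ K then Ioo (-t) t else Ioi t) :=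
    isOpen_set_pi finite_univ fun i _ => by split_ifs <;> simp [isOpen_Ioo, isOpen_Ioi]
  convert hf.isOpen_inter_preimage hΩ hopen using 1
  ext x
  simp [region]

lemma exists_abs_eq_of_mem_frontier_region (hΩ : IsOpen Ω) (hf : ContinuousOn f Ω) (ht : 0 < t)
    {x : E} (hx : x ∈ Ω) (hxf : x ∈ frontier (region Ω f K t)) :
    (∀ i, -t ≤ f x i) ∧ ∃ j, |f x j| = t := by
  rw [(isOpen_region hΩ hf).frontier_eq] at hxf
  have hclosed : IsClosed (univ.pi fun i => if i ∈ K then Icc (-t) t else Ici t) :=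
    isClosed_set_pi fun i _ => by split_ifs <;> simp [isClosed_Icc, isClosed_Ici]
  have hfx (i : ι) : f x i ∈ if i ∈ K then Icc (-t) t else Ici t := by
    refine hclosed.closure_subset_iff.2 ?_
      ((hf.continuousAt (hΩ.mem_nhds hx)).continuousWithinAt.mem_closure_image hxf.1) i (mem_univ i)
    rintro _ ⟨y, hy, rfl⟩ i -
    have := hy.2 i
    dsimp only
    split_ifs at this ⊢
    exacts [Ioo_subset_Icc_self this, Ioi_subset_Ici_self this]
  refine ⟨fun i => ?_, ?_⟩
  · have := hfx i
    split_ifs at this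
    exacts [this.1, (neg_lt_self ht).le.trans this]
  · by_contra! hne
    refine hxf.2 ⟨hx, fun i => ?_⟩
    have := hfx i
    split_ifs at this ⊢
    exacts [abs_lt.1 ((abs_le.2 this).lt_of_ne (hne i)),
      (mem_Ici.1 this).lt_of_ne fun h => hne i (by rw [← h, abs_of_pos ht])]

end Region

section Energy

variable {E ι : Type*} [NormedAddCommGroup E] [NormedSpace ℝ E] [Fintype ι] {p : ℝ}
  {u f : E → ι → ℝ}

/-- The integrand `∑ i, u i * (|f i| ^ p + ‖∇ f i‖ ^ p)` of the right-hand side. -/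
noncomputable def energyDensity (p : ℝ) (u f : E → ι → ℝ) (x : E) : ℝ :=
  ∑ i, u x i * (|f x i| ^ p + ‖fderiv ℝ (fun y => f y i) x‖ ^ p)

/-- The right-hand side of the inequality, `∫_Ω ∑ i, u i * (|f i| ^ p + ‖∇ f i‖ ^ p)`. -/
noncomputable def energy [MeasurableSpace E] (μ : Measure E) (Ω : Set E) (p : ℝ)
    (u f : E → ι → ℝ) : ℝ≥0∞ :=
  ∫⁻ x in Ω, ENNReal.ofReal (energyDensity p u f x) ∂μ

lemma mul_le_energyDensity {x : E} (hu : 0 ≤ u x) (i : ι) :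
    u x i * (|f x i| ^ p + ‖fderiv ℝ (fun y => f y i) x‖ ^ p) ≤ energyDensity p u f x :=
  Finset.single_le_sum (f := fun i => u x i * (|f x i| ^ p + ‖fderiv ℝ (fun y => f y i) x‖ ^ p))
    (fun j _ => mul_nonneg (hu j) (by positivity)) (Finset.mem_univ i)

lemma sum_mul_abs_rpow_le_energyDensity {x : E} (hu : 0 ≤ u x) :
    ∑ i, u x i * |f x i| ^ p ≤ energyDensity p u f x :=
  Finset.sum_le_sum fun i _ =>
    mul_le_mul_of_nonneg_left (le_add_of_nonneg_right (by positivity)) (hu i)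

/-- The pointwise facts `IsControlled` at every point of `Ω`, together with the regularity needed
for level sets and integrals. -/
structure IsControlledOn (p c δ M : ℝ) (Ω : Set E) (u f : E → ι → ℝ) : Prop where
  continuousOn : ContinuousOn u Ω
  differentiableOn : DifferentiableOn ℝ f Ω
  isControlled : ∀ x ∈ Ω, IsControlled p c δ M (u x) (f x)

variable [MeasurableSpace E] {μ : Measure E} {Ω : Set E} {c δ M : ℝ}

lemma lintegral_le_of_le_energyDensity {S : Set E} (hS : MeasurableSet S) (hSΩ : S ⊆ Ω)
    (hM : 0 ≤ M) {g : E → ℝ} (hg : ∀ x ∈ S, g x ≤ M * (1 + energyDensity p u f x)) :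
    ∫⁻ x in S, ENNReal.ofReal (g x) ∂μ ≤ ENNReal.ofReal M * (μ S + energy μ Ω p u f) :=
  calc ∫⁻ x in S, ENNReal.ofReal (g x) ∂μ
      ≤ ∫⁻ x in S, ENNReal.ofReal M * (1 + ENNReal.ofReal (energyDensity p u f x)) ∂μ := by
        refine setLIntegral_mono' hS fun x hx => (ENNReal.ofReal_le_ofReal (hg x hx)).trans ?_
        rw [ENNReal.ofReal_mul hM]
        gcongr
        exact ENNReal.ofReal_add_le.trans_eq (by rw [ENNReal.ofReal_one])
    _ ≤ ENNReal.ofReal M * (μ S + energy μ Ω p u f) := by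
        rw [lintegral_const_mul' _ _ ENNReal.ofReal_ne_top, lintegral_add_left measurable_const,
          setLIntegral_one]
        gcongr
        exact lintegral_mono_set hSΩ

variable [BorelSpace E]

lemma IsControlledOn.aemeasurable_energyDensity
    (h : IsControlledOn p c δ M Ω u f) (hΩ : MeasurableSet Ω) :
    AEMeasurable (energyDensity p u f) (μ.restrict Ω) := by
  have hu (i : ι) := (continuousOn_pi.1 h.continuousOn i).aemeasurable (μ := μ) hΩ
  have hf (i : ι) := (continuousOn_pi.1 h.differentiableOn.continuousOn i).aemeasurable (μ := μ) hΩ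
  exact Finset.aemeasurable_fun_sum _ fun i _ => (hu i).mul <|
    ((continuous_abs.measurable.comp_aemeasurable (hf i)).pow_const p).add
      ((measurable_fderiv ℝ fun y => f y i).norm.pow_const p).aemeasurable

lemma IsControlledOn.measure_le_energyDensity_le
    (h : IsControlledOn p c δ M Ω u f) (hΩ : MeasurableSet Ω) {b : ℝ} (hb : 0 < b) :
    μ {x ∈ Ω | b ≤ energyDensity p u f x} ≤ (ENNReal.ofReal b)⁻¹ * energy μ Ω p u f := by
  have hmarkov := meas_ge_le_lintegral_div (h.aemeasurable_energyDensity (μ := μ) hΩ).ennreal_ofReal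
    (ENNReal.ofReal_pos.2 hb).ne' ENNReal.ofReal_ne_top
  rw [ENNReal.div_eq_inv_mul, Measure.restrict_apply' hΩ] at hmarkov
  refine (measure_mono fun x hx => ?_).trans hmarkov
  exact ⟨ENNReal.ofReal_le_ofReal hx.2, hx.1⟩

end Energy

/-! ### Regions with small boundary -/

lemma one_add_le_mul_rpow_add_rpow {p b c u v g : ℝ} (hp : 1 ≤ p) (hb : 0 < b) (hb1 : b ≤ 1)
    (hc : 0 < c) (hu : c ≤ u) (hv : b ≤ v) (hg : 0 ≤ g) :
    1 + g ≤ 2 / (c * b ^ p) * (u * (v ^ p + g ^ p)) := by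
  have hp0 : 0 ≤ p := zero_le_one.trans hp
  have hbp : b ^ p ≤ 1 := Real.rpow_le_one hb.le hb1 hp0
  have hvp : b ^ p ≤ v ^ p := Real.rpow_le_rpow hb.le hv hp0
  have hg1 : g ≤ 1 + g ^ p := by
    rcases le_total g 1 with h | h
    · linarith [Real.rpow_nonneg hg p]
    · linarith [Real.self_le_rpow_of_one_le h hp]
  rw [div_mul_eq_mul_div, le_div_iff₀ (by positivity)]
  calc (1 + g) * (c * b ^ p) ≤ c * (2 * b ^ p + b ^ p * g ^ p) := by
        nlinarith [mul_le_mul_of_nonneg_left hg1 (by positivity : 0 ≤ c * b ^ p)]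
    _ ≤ c * (2 * (v ^ p + g ^ p)) := by
        gcongr
        nlinarith [mul_le_mul_of_nonneg_right hbp (Real.rpow_nonneg hg p), Real.rpow_nonneg hg p]
    _ ≤ 2 * (u * (v ^ p + g ^ p)) := by
        have := mul_le_mul_of_nonneg_right hu
          (add_nonneg (Real.rpow_nonneg (hb.le.trans hv) p) (Real.rpow_nonneg hg p))
        linarith

lemma exists_mem_Ioo_le_lintegral {h : ℝ → ℝ≥0∞} (hh : Measurable h) {a b : ℝ} (hab : a < b) :
    ∃ t ∈ Ioo a b, h t ≤ (ENNReal.ofReal (b - a))⁻¹ * ∫⁻ t, h t := by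
  obtain ⟨t, ht, hle⟩ := exists_le_setLAverage (μ := volume) (s := Ioo a b) (by simp [hab])
    (by simp) hh.aemeasurable
  refine ⟨t, ht, hle.trans ?_⟩
  rw [setLAverage_eq, Real.volume_Ioo, ENNReal.div_eq_inv_mul]
  gcongr
  exact Measure.restrict_le_self

lemma measurableSet_setOf_le_of_continuousOn {X : Type*} [TopologicalSpace X] [MeasurableSpace X]
    [BorelSpace X] {s : Set X} (hs : IsOpen s) {g : X → ℝ} (hg : ContinuousOn g s) (a : ℝ) :
    MeasurableSet {x ∈ s | a ≤ g x} := by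
  convert hs.measurableSet.diff (hg.isOpen_inter_preimage hs (isOpen_Iio (a := a))).measurableSet
    using 1
  ext x
  simp +contextual

section Isoperimetry

variable {E ι : Type*} [NormedAddCommGroup E] [NormedSpace ℝ E] [Fintype ι] {p c δ M t : ℝ}
  {u f : E → ι → ℝ} {Ω : Set E}

/-- The level set `{|f j| = t}` is only needed where it meets the boundary of a region; there
`u j` is bounded below. -/
lemma IsControlledOn.inter_frontier_region_subset [DecidableEq ι]
    (h : IsControlledOn p c δ M Ω u f) (hΩ : IsOpen Ω) (hc : 0 < c) (K : Finset ι)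
    (ht : t ∈ Ioo (c / 2) c) :
    Ω ∩ frontier (region Ω f K t) ⊆
      ⋃ j, {x ∈ Ω | c ≤ u x j ∧ c / 2 ≤ |f x j|} ∩ (fun x => |f x j|) ⁻¹' {t} := by
  rintro x ⟨hx, hxf⟩
  obtain ⟨hneg, j, hj⟩ := exists_abs_eq_of_mem_frontier_region hΩ h.differentiableOn.continuousOn
    ((half_pos hc).trans ht.1) hx hxf
  refine mem_iUnion.2 ⟨j, ⟨hx, ?_, hj ▸ ht.1.le⟩, hj⟩
  exact (h.isControlled x hx).le_of_lt (fun i => (neg_lt_neg ht.2).trans_le (hneg i)) j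
    ((le_abs_self _).trans_lt (hj ▸ ht.2))

variable [MeasurableSpace E] [BorelSpace E]

/-- A relative isoperimetric inequality of Cheeger type: in `Ω`, the measure of a set filling at
most half of `Ω` is at most `C` times the area of its relative boundary. -/
def CheegerInequality (μ : Measure E) (Ω : Set E) (C : ℝ≥0∞) : Prop :=
  ∀ S ⊆ Ω, MeasurableSet S → μ S ≤ μ Ω / 2 →
    μ S ≤ C * μH[(finrank ℝ E : ℝ) - 1] (Ω ∩ frontier S)

lemma CheegerInequality.measure_le_or_measure_sdiff_le {μ : Measure E} {S : Set E} {C : ℝ≥0∞}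
    (h : CheegerInequality μ Ω C) (hΩ : IsOpen Ω) (hμΩ : μ Ω ≠ ∞) (hSΩ : S ⊆ Ω)
    (hS : MeasurableSet S) :
    μ S ≤ C * μH[(finrank ℝ E : ℝ) - 1] (Ω ∩ frontier S) ∨
      μ (Ω \ S) ≤ C * μH[(finrank ℝ E : ℝ) - 1] (Ω ∩ frontier S) := by
  have hfrontier : Ω ∩ frontier (Ω \ S) = Ω ∩ frontier S := by
    rw [sdiff_eq, inter_comm Ω Sᶜ, inter_comm, frontier_inter_open_inter hΩ, frontier_compl,
      inter_comm]
  rcases le_total (μ S) (μ Ω / 2) with hle | hle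
  · exact .inl (h S hSΩ hS hle)
  · rw [← hfrontier]
    refine .inr (h _ sdiff_subset (hΩ.measurableSet.diff hS) ?_)
    rw [measure_sdiff hSΩ hS.nullMeasurableSet (ne_top_of_le_ne_top hμΩ (measure_mono hSΩ))]
    exact (tsub_le_tsub_left hle _).trans_eq (ENNReal.sub_half hμΩ)

variable [FiniteDimensional ℝ E] [Nontrivial E]

lemma IsControlledOn.exists_measurable_hausdorffMeasure_fiber_le
    (h : IsControlledOn p c δ M Ω u f) (hΩ : IsOpen Ω) (hp : 1 ≤ p) (hc : 0 < c) (hc1 : c ≤ 1)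
    (j : ι) :
    ∃ h : ℝ → ℝ≥0∞, Measurable h ∧
      (∀ t, μH[(finrank ℝ E : ℝ) - 1]
        ({x ∈ Ω | c ≤ u x j ∧ c / 2 ≤ |f x j|} ∩ (fun x => |f x j|) ⁻¹' {t}) ≤ h t) ∧
      ∫⁻ t, h t ≤
        ENNReal.ofReal (2 / (c * (c / 2) ^ p)) * energy μH[finrank ℝ E] Ω p u f := by
  set S : Set E := {x ∈ Ω | c ≤ u x j ∧ c / 2 ≤ |f x j|}
  have hS : MeasurableSet S := by
    convert (measurableSet_setOf_le_of_continuousOn hΩ (continuousOn_pi.1 h.continuousOn j) c).inter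
      (measurableSet_setOf_le_of_continuousOn hΩ
        (continuousOn_pi.1 h.differentiableOn.continuousOn j).abs (c / 2)) using 1
    exact ext fun x => and_and_left
  obtain ⟨g, hg, hfiber, hint⟩ := exists_measurable_hausdorffMeasure_fiber_le_lintegral hS
    (f := fun x => |f x j|) (ε := 1)
    (fun x hx => ((differentiableAt_pi.1 (h.differentiableOn.differentiableAt
      (hΩ.mem_nhds hx.1)) j).hasFDerivAt.abs (abs_pos.1 ((half_pos hc).trans_le hx.2.2))
      ).hasFDerivWithinAt) one_ne_zero
  refine ⟨g, hg, hfiber, hint.trans ?_⟩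
  rw [energy, ← lintegral_const_mul' _ _ ENNReal.ofReal_ne_top]
  refine (setLIntegral_mono' hS fun x hx => ?_).trans (lintegral_mono_set fun x hx => hx.1)
  have hsign : |(SignType.sign (f x j) : ℝ)| ≤ 1 := by cases SignType.sign (f x j) <;> simp
  rw [← ENNReal.ofReal_mul (by positivity), ENNReal.coe_one, ← ofReal_norm, ← ENNReal.ofReal_one,
    ← ENNReal.ofReal_add (norm_nonneg _) zero_le_one, norm_smul, Real.norm_eq_abs]
  refine ENNReal.ofReal_le_ofReal ?_
  calc |(SignType.sign (f x j) : ℝ)| * ‖fderiv ℝ (fun y => f y j) x‖ + 1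
      ≤ 1 + ‖fderiv ℝ (fun y => f y j) x‖ := by
        rw [add_comm]
        gcongr
        exact mul_le_of_le_one_left (norm_nonneg _) hsign
    _ ≤ 2 / (c * (c / 2) ^ p) * (u x j * (|f x j| ^ p + ‖fderiv ℝ (fun y => f y j) x‖ ^ p)) :=
        one_add_le_mul_rpow_add_rpow hp (half_pos hc) (by linarith) hc hx.2.1 hx.2.2 (norm_nonneg _)
    _ ≤ 2 / (c * (c / 2) ^ p) * energyDensity p u f x := by
        gcongr
        exact mul_le_energyDensity (h.isControlled x hx.1).nonneg j

lemma IsControlledOn.exists_hausdorffMeasure_inter_frontier_region_le [DecidableEq ι]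
    (h : IsControlledOn p c δ M Ω u f) (hΩ : IsOpen Ω) (hp : 1 ≤ p) (hc : 0 < c) (hc1 : c ≤ 1)
    (K : Finset ι) :
    ∃ t ∈ Ioo (c / 2) c, μH[(finrank ℝ E : ℝ) - 1] (Ω ∩ frontier (region Ω f K t)) ≤
      (ENNReal.ofReal (c - c / 2))⁻¹ * (Fintype.card ι *
        (ENNReal.ofReal (2 / (c * (c / 2) ^ p)) * energy μH[finrank ℝ E] Ω p u f)) := by
  choose g hg hfiber hint using h.exists_measurable_hausdorffMeasure_fiber_le hΩ hp hc hc1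
  obtain ⟨t, ht, hle⟩ := exists_mem_Ioo_le_lintegral
    (Finset.measurable_fun_sum Finset.univ fun j _ => hg j) (half_lt_self hc)
  refine ⟨t, ht, ?_⟩
  calc μH[(finrank ℝ E : ℝ) - 1] (Ω ∩ frontier (region Ω f K t))
      ≤ ∑ j, g j t :=
        (measure_mono (h.inter_frontier_region_subset hΩ hc K ht)).trans <|
          (measure_iUnion_fintype_le _ _).trans (Finset.sum_le_sum fun j _ => hfiber j t)
    _ ≤ (ENNReal.ofReal (c - c / 2))⁻¹ * ∑ j, ∫⁻ t, g j t := by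
        rwa [← lintegral_finsetSum _ fun j _ => hg j]
    _ ≤ _ := by
        gcongr
        exact (Finset.sum_le_card_nsmul _ _ _ fun j _ => hint j).trans_eq
          (by rw [nsmul_eq_mul, Finset.card_univ])

theorem CheegerInequality.exists_measure_region_le [DecidableEq ι] {μ : Measure E}
    [μ.IsAddHaarMeasure] {C : ℝ≥0∞} (hiso : CheegerInequality μ Ω C) (hC : C ≠ ∞) (hΩ : IsOpen Ω)
    (hμΩ : μ Ω ≠ ∞) (hp : 1 ≤ p) (hc : 0 < c) (hc1 : c ≤ 1) :
    ∃ C' : ℝ≥0∞, C' ≠ ∞ ∧ ∀ u f : E → ι → ℝ, IsControlledOn p c δ M Ω u f → ∀ K : Finset ι,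
      ∃ t ∈ Ioo (c / 2) c, μ (region Ω f K t) ≤ C' * energy μ Ω p u f ∨
        μ (Ω \ region Ω f K t) ≤ C' * energy μ Ω p u f := by
  obtain ⟨a, ha⟩ : ∃ a : ℝ≥0, (μH[finrank ℝ E] : Measure E) = a • μ :=
    ⟨_, Measure.isAddLeftInvariant_eq_smul _ μ⟩
  have henergy (u f : E → ι → ℝ) : energy μH[finrank ℝ E] Ω p u f = a * energy μ Ω p u f := by
    rw [energy, ha, Measure.restrict_smul, lintegral_smul_measure, ENNReal.smul_def, smul_eq_mul,
      energy]
  have hc2 : ENNReal.ofReal (c - c / 2) ≠ 0 := by simpa using hc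
  refine ⟨C * ((ENNReal.ofReal (c - c / 2))⁻¹ * (Fintype.card ι *
    (ENNReal.ofReal (2 / (c * (c / 2) ^ p)) * a))), by finiteness, fun u f h K => ?_⟩
  obtain ⟨t, ht, hle⟩ :=
    h.exists_hausdorffMeasure_inter_frontier_region_le hΩ hp hc hc1 K
  have hCle := mul_le_mul_right hle C
  rw [henergy] at hCle
  simp only [mul_assoc]
  exact ⟨t, ht, (hiso.measure_le_or_measure_sdiff_le hΩ hμΩ region_subset
    (isOpen_region hΩ h.differentiableOn.continuousOn).measurableSet).imp hCle.trans' hCle.trans'⟩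

end Isoperimetry

/-! ### Separation -/

lemma exists_seq_tendsto_zero {β : Type*} {P : Set β} {D : β → ℝ≥0∞}
    (h : ∀ C : ℝ≥0∞, C ≠ ∞ → ∃ b ∈ P, C * D b < 1) :
    ∃ w : ℕ → β, (∀ n, w n ∈ P) ∧ (∀ n, D (w n) ≤ 1) ∧ Tendsto (fun n => D (w n)) atTop (𝓝 0) := by
  choose w hwP hw using fun n : ℕ => h (n + 1 : ℕ) (ENNReal.natCast_ne_top _)
  have hlt (n : ℕ) : D (w n) < ((n + 1 : ℕ) : ℝ≥0∞)⁻¹ := by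
    rw [← one_div, ENNReal.lt_div_iff_mul_lt (by simp) (by simp), mul_comm]
    exact hw n
  refine ⟨w, hwP, fun n => (hlt n).le.trans (by simp [ENNReal.inv_le_one]), ?_⟩
  exact tendsto_of_tendsto_of_tendsto_of_le_of_le tendsto_const_nhds
    ((tendsto_add_atTop_iff_nat 1).2 ENNReal.tendsto_inv_nat_nhds_zero) (fun _ => zero_le)
    fun n => (hlt n).le

section Separation

variable {E ι : Type*} [NormedAddCommGroup E] [NormedSpace ℝ E] [Fintype ι] {Ω : Set E}
  {p c δ M t : ℝ}

section Pointwise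

variable {u f : E → ι → ℝ} [DecidableEq ι] {K : Finset ι}

lemma IsControlledOn.le_left_of_mem_region (h : IsControlledOn p c δ M Ω u f) (hc : 0 < c)
    (ht : t ∈ Ioo (c / 2) c) {x : E} (hx : x ∈ region Ω f K t) {i : ι} (hi : i ∈ K) :
    c ≤ u x i := by
  refine (h.isControlled x hx.1).le_of_lt (fun j => ?_) i
    ((le_abs_self _).trans_lt ((abs_lt_of_mem_region hx hi).trans ht.2))
  by_cases hj : j ∈ K
  · linarith [neg_abs_le (f x j), abs_lt_of_mem_region hx hj, ht.2]
  · linarith [lt_of_mem_region hx hj, ht.1]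

lemma IsControlledOn.mul_abs_rpow_le_energyDensity (h : IsControlledOn p c δ M Ω u f) (hc : 0 < c)
    (ht : t ∈ Ioo (c / 2) c) {x : E} (hx : x ∈ region Ω f K t) {i : ι} (hi : i ∈ K) :
    c * |f x i| ^ p ≤ energyDensity p u f x :=
  calc c * |f x i| ^ p
      ≤ u x i * (|f x i| ^ p + ‖fderiv ℝ (fun y => f y i) x‖ ^ p) :=
        mul_le_mul (h.le_left_of_mem_region hc ht hx hi) (le_add_of_nonneg_right (by positivity))
          (by positivity) ((h.isControlled x hx.1).nonneg i)
    _ ≤ energyDensity p u f x := mul_le_energyDensity (h.isControlled x hx.1).nonneg i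

lemma IsControlledOn.mul_rpow_le_energyDensity (h : IsControlledOn p c δ M Ω u f) (hc : 0 < c)
    (hp : 0 ≤ p) (ht : c / 2 < t) {x : E} (hx : x ∈ region Ω f K t) {i : ι} (hi : i ∉ K) :
    u x i * (c / 2) ^ p ≤ energyDensity p u f x :=
  calc u x i * (c / 2) ^ p
      ≤ u x i * (|f x i| ^ p + ‖fderiv ℝ (fun y => f y i) x‖ ^ p) := by
        refine mul_le_mul_of_nonneg_left (le_add_of_le_of_nonneg ?_ (by positivity))
          ((h.isControlled x hx.1).nonneg i)
        gcongr
        exact (ht.trans (lt_of_mem_region hx hi)).le.trans (le_abs_self _)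
    _ ≤ energyDensity p u f x := mul_le_energyDensity (h.isControlled x hx.1).nonneg i

lemma IsControlledOn.subset_iUnion_region_union (h : IsControlledOn p c δ M Ω u f)
    {t : Finset ι → ℝ} (ht : ∀ K, t K ∈ Ioo (c / 2) c) :
    Ω ⊆ (⋃ K, region Ω f K (t K)) ∪ {x ∈ Ω | δ ≤ energyDensity p u f x} := by
  intro x hx
  by_cases hδ : δ ≤ energyDensity p u f x
  · exact .inr ⟨hx, hδ⟩
  · have hdich := (h.isControlled x hx).dichotomy
      ((sum_mul_abs_rpow_le_energyDensity (h.isControlled x hx).nonneg).trans_lt (not_le.1 hδ))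
    let K : Finset ι := {i | |f x i| < c / 2}
    refine .inl (mem_iUnion.2 ⟨K, hx, fun i => ?_⟩)
    split_ifs with hi
    · exact abs_lt.1 (((Finset.mem_filter_univ i).1 hi).trans (ht K).1)
    · exact (ht K).2.trans ((hdich i).resolve_left fun hfi => hi ((Finset.mem_filter_univ i).2 hfi))

end Pointwise

variable [MeasurableSpace E] {μ : Measure E}

/-- Hypothesis (ii) of the theorem: no `L^p`-bounded sequence in `U` has, for a nonempty index set
`I`, the components `u i` with `i ∈ I` and `F u i` with `i ∉ I` all tending to zero in measure. -/
def NoDegenerateSequence (μ : Measure E) (Ω : Set E) (p : ℝ) (U : Set (E → ι → ℝ))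
    (F : (E → ι → ℝ) → E → ι → ℝ) : Prop :=
  ¬ ∃ w : ℕ → E → ι → ℝ, (∀ n, w n ∈ U) ∧
    (∃ B : ℝ, ∀ n, ∫⁻ x in Ω, ENNReal.ofReal (∑ i, |w n x i| ^ p) ∂μ ≤ ENNReal.ofReal B) ∧
    ∃ I : Finset ι, I.Nonempty ∧
      (∀ i ∈ I, TendstoInMeasure (μ.restrict Ω) (fun n x => w n x i) atTop fun _ => 0) ∧
      ∀ i ∉ I, TendstoInMeasure (μ.restrict Ω) (fun n x => F (w n) x i) atTop fun _ => 0

lemma IsControlledOn.lintegral_le {u f : E → ι → ℝ} (h : IsControlledOn p c δ M Ω u f)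
    {S : Set E} (hSΩ : S ⊆ Ω) (hS : MeasurableSet S) (hM : 0 ≤ M) :
    ∫⁻ x in S, ENNReal.ofReal (∑ i, |f x i| ^ p) ∂μ ≤
      ENNReal.ofReal M * (μ S + energy μ Ω p u f) :=
  lintegral_le_of_le_energyDensity hS hSΩ hM fun x hx =>
    (h.isControlled x (hSΩ hx)).sum_abs_rpow_le_right.trans <| by
      gcongr
      exact sum_mul_abs_rpow_le_energyDensity (h.isControlled x (hSΩ hx)).nonneg

variable [BorelSpace E] {w f : ℕ → E → ι → ℝ}

lemma tendstoInMeasure_zero_of_tendsto_energy (h : ∀ n, IsControlledOn p c δ M Ω (w n) (f n))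
    (hΩ : MeasurableSet Ω) (henergy : Tendsto (fun n => energy μ Ω p (w n) (f n)) atTop (𝓝 0))
    {S : ℕ → Set E} (hS : Tendsto (fun n => μ (Ω \ S n)) atTop (𝓝 0)) {g : ℕ → E → ℝ}
    (hg : ∀ ε > 0, ∃ b > 0, ∀ n, ∀ x ∈ S n, ε ≤ |g n x| → b ≤ energyDensity p (w n) (f n) x) :
    TendstoInMeasure (μ.restrict Ω) g atTop fun _ => 0 := by
  rw [tendstoInMeasure_iff_norm]
  intro ε hε
  obtain ⟨b, hb, hgb⟩ := hg ε hε
  have hlim : Tendsto (fun n => μ (Ω \ S n) + (ENNReal.ofReal b)⁻¹ * energy μ Ω p (w n) (f n))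
      atTop (𝓝 0) := by
    simpa using hS.add (ENNReal.Tendsto.const_mul henergy (.inr (by simpa using hb)))
  refine tendsto_of_tendsto_of_tendsto_of_le_of_le tendsto_const_nhds hlim (fun _ => zero_le)
    fun n => ?_
  have hsub : {x | ε ≤ ‖g n x - 0‖} ∩ Ω ⊆
      (Ω \ S n) ∪ {x ∈ Ω | b ≤ energyDensity p (w n) (f n) x} := fun x hx => by
    by_cases hxS : x ∈ S n
    · exact .inr ⟨hx.2, hgb n x hxS (by simpa using hx.1)⟩
    · exact .inl ⟨hx.2, hxS⟩
  calc (μ.restrict Ω) {x | ε ≤ ‖g n x - 0‖}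
      ≤ μ (Ω \ S n) + μ {x ∈ Ω | b ≤ energyDensity p (w n) (f n) x} := by
        rw [Measure.restrict_apply' hΩ]
        exact (measure_mono hsub).trans (measure_union_le _ _)
    _ ≤ μ (Ω \ S n) + (ENNReal.ofReal b)⁻¹ * energy μ Ω p (w n) (f n) := by
        gcongr
        exact (h n).measure_le_energyDensity_le hΩ hb

variable [DecidableEq ι] {K : Finset ι}

lemma tendstoInMeasure_right_of_mem (h : ∀ n, IsControlledOn p c δ M Ω (w n) (f n))
    (hΩ : MeasurableSet Ω) (hp : 0 ≤ p) (hc : 0 < c)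
    (henergy : Tendsto (fun n => energy μ Ω p (w n) (f n)) atTop (𝓝 0)) {t : ℕ → ℝ}
    (ht : ∀ n, t n ∈ Ioo (c / 2) c)
    (hregion : Tendsto (fun n => μ (Ω \ region Ω (f n) K (t n))) atTop (𝓝 0)) {i : ι}
    (hi : i ∈ K) :
    TendstoInMeasure (μ.restrict Ω) (fun n x => f n x i) atTop fun _ => 0 :=
  tendstoInMeasure_zero_of_tendsto_energy h hΩ henergy hregion fun ε hε =>
    ⟨c * ε ^ p, by positivity, fun n x hx hεx =>
      le_trans (by gcongr) ((h n).mul_abs_rpow_le_energyDensity hc (ht n) hx hi)⟩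

lemma tendstoInMeasure_left_of_notMem (h : ∀ n, IsControlledOn p c δ M Ω (w n) (f n))
    (hΩ : MeasurableSet Ω) (hp : 0 ≤ p) (hc : 0 < c)
    (henergy : Tendsto (fun n => energy μ Ω p (w n) (f n)) atTop (𝓝 0)) {t : ℕ → ℝ}
    (ht : ∀ n, c / 2 < t n)
    (hregion : Tendsto (fun n => μ (Ω \ region Ω (f n) K (t n))) atTop (𝓝 0)) {i : ι}
    (hi : i ∉ K) :
    TendstoInMeasure (μ.restrict Ω) (fun n x => w n x i) atTop fun _ => 0 :=
  tendstoInMeasure_zero_of_tendsto_energy h hΩ henergy hregion fun ε hε =>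
    ⟨ε * (c / 2) ^ p, by positivity, fun n x hx hεx => by
      refine le_trans ?_ ((h n).mul_rpow_le_energyDensity hc hp (ht n) hx hi)
      rw [abs_of_nonneg (((h n).isControlled x hx.1).nonneg i)] at hεx
      gcongr⟩

variable {U : Set (E → ι → ℝ)} {F : (E → ι → ℝ) → E → ι → ℝ} {C : ℝ≥0∞}

/-- If the energy were arbitrarily small, a sequence with energy tending to zero would concentrate
on its regions `K`, where the components `u i`, `i ∉ K`, and `f i`, `i ∈ K`, die out. -/
lemma NoDegenerateSequence.exists_one_le_mul_energy (hU : NoDegenerateSequence μ Ω p U F)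
    (hF : ∀ u ∈ U, IsControlledOn p c δ M Ω u (F u)) (hΩ : MeasurableSet Ω) (hμΩ : μ Ω ≠ ∞)
    (hp : 0 ≤ p) (hc : 0 < c) (hM : 0 ≤ M) (hC : C ≠ ∞) (hK : K ≠ Finset.univ) :
    ∃ C' : ℝ≥0∞, C' ≠ ∞ ∧ ∀ u ∈ U,
      (∃ t ∈ Ioo (c / 2) c, μ (Ω \ region Ω (F u) K t) ≤ C * energy μ Ω p u (F u)) →
        1 ≤ C' * energy μ Ω p u (F u) := by
  by_contra! hsmall
  obtain ⟨w, hw, hw1, hw0⟩ := exists_seq_tendsto_zero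
    (P := {u ∈ U | ∃ t ∈ Ioo (c / 2) c, μ (Ω \ region Ω (F u) K t) ≤ C * energy μ Ω p u (F u)})
    fun C' hC' => (hsmall C' hC').imp fun u hu => ⟨⟨hu.1, hu.2.1⟩, hu.2.2⟩
  choose hwU t ht hregion using hw
  have hcontrolled (n : ℕ) := hF (w n) (hwU n)
  have hregion0 : Tendsto (fun n => μ (Ω \ region Ω (F (w n)) K (t n))) atTop (𝓝 0) :=
    tendsto_of_tendsto_of_tendsto_of_le_of_le tendsto_const_nhds
      (by simpa using ENNReal.Tendsto.const_mul hw0 (.inr hC)) (fun _ => zero_le) hregion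
  have hbound (n : ℕ) : ∫⁻ x in Ω, ENNReal.ofReal (∑ i, |w n x i| ^ p) ∂μ ≤
      ENNReal.ofReal M * (μ Ω + 1) := by
    refine (lintegral_le_of_le_energyDensity hΩ subset_rfl hM fun x hx =>
      ((hcontrolled n).isControlled x hx).sum_abs_rpow_le_left.trans ?_).trans
      (by gcongr; exact hw1 n)
    gcongr
    exact sum_mul_abs_rpow_le_energyDensity ((hcontrolled n).isControlled x hx).nonneg
  refine hU ⟨w, hwU, ⟨(ENNReal.ofReal M * (μ Ω + 1)).toReal, fun n => ?_⟩, Kᶜ,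
    Finset.nonempty_iff_ne_empty.2 (by simpa using hK), fun i hi => ?_, fun i hi => ?_⟩
  · exact (hbound n).trans_eq (ENNReal.ofReal_toReal (by finiteness)).symm
  · exact tendstoInMeasure_left_of_notMem hcontrolled hΩ hp hc hw0 (fun n => (ht n).1) hregion0
      (Finset.mem_compl.1 hi)
  · exact tendstoInMeasure_right_of_mem hcontrolled hΩ hp hc hw0 ht hregion0
      (by simpa using hi)

lemma IsControlledOn.measure_le_of_forall_measure_region_le {u f : E → ι → ℝ}
    (h : IsControlledOn p c δ M Ω u f) (hΩ : MeasurableSet Ω) (hδ : 0 < δ) {t : Finset ι → ℝ}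
    (ht : ∀ K, t K ∈ Ioo (c / 2) c)
    (hregion : ∀ K, μ (region Ω f K (t K)) ≤ C * energy μ Ω p u f) :
    μ Ω ≤ (Fintype.card (Finset ι) * C + (ENNReal.ofReal δ)⁻¹) * energy μ Ω p u f :=
  calc μ Ω
      ≤ ∑ K, μ (region Ω f K (t K)) + μ {x ∈ Ω | δ ≤ energyDensity p u f x} :=
        (measure_mono (h.subset_iUnion_region_union ht)).trans <|
          (measure_union_le _ _).trans <| by gcongr; exact measure_iUnion_fintype_le _ _
    _ ≤ Fintype.card (Finset ι) • (C * energy μ Ω p u f) +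
          (ENNReal.ofReal δ)⁻¹ * energy μ Ω p u f :=
        add_le_add (Finset.sum_le_card_nsmul _ _ _ fun K _ => hregion K)
          (h.measure_le_energyDensity_le hΩ hδ)
    _ = _ := by rw [nsmul_eq_mul, add_mul, mul_assoc]

lemma NoDegenerateSequence.exists_measure_sdiff_region_le_or
    (hU : NoDegenerateSequence μ Ω p U F) (hF : ∀ u ∈ U, IsControlledOn p c δ M Ω u (F u))
    (hΩ : MeasurableSet Ω) (hμΩ : μ Ω ≠ ∞) (hp : 0 ≤ p) (hc : 0 < c) (hδ : 0 < δ) (hM : 0 ≤ M)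
    (hC : C ≠ ∞)
    (hregion : ∀ u ∈ U, ∀ K, ∃ t ∈ Ioo (c / 2) c,
      μ (region Ω (F u) K t) ≤ C * energy μ Ω p u (F u) ∨
        μ (Ω \ region Ω (F u) K t) ≤ C * energy μ Ω p u (F u)) :
    ∃ C' : ℝ≥0∞, C' ≠ ∞ ∧ ∀ u ∈ U,
      (∃ t ∈ Ioo (c / 2) c,
        μ (Ω \ region Ω (F u) Finset.univ t) ≤ C * energy μ Ω p u (F u)) ∨
      μ Ω ≤ C' * energy μ Ω p u (F u) := by
  choose D hD hDle using fun K : {K : Finset ι // K ≠ Finset.univ} =>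
    hU.exists_one_le_mul_energy hF hΩ hμΩ hp hc hM hC K.2
  refine ⟨μ Ω * ∑ K, D K + (Fintype.card (Finset ι) * C + (ENNReal.ofReal δ)⁻¹), ?_,
    fun u hu => ?_⟩
  · have : ∑ K, D K ≠ ∞ := ENNReal.sum_ne_top.2 fun K _ => hD K
    have : ENNReal.ofReal δ ≠ 0 := by simpa using hδ
    finiteness
  choose t ht hor using hregion u hu
  by_cases hlarge : ∃ K, μ (Ω \ region Ω (F u) K (t K)) ≤ C * energy μ Ω p u (F u)
  · obtain ⟨K, hle⟩ := hlarge
    rcases eq_or_ne K Finset.univ with rfl | hK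
    · exact .inl ⟨t _, ht _, hle⟩
    · right
      calc μ Ω ≤ μ Ω * (D ⟨K, hK⟩ * energy μ Ω p u (F u)) :=
            le_mul_of_one_le_right' (hDle ⟨K, hK⟩ u hu ⟨t K, ht K, hle⟩)
        _ ≤ μ Ω * ((∑ K, D K) * energy μ Ω p u (F u)) := by
            gcongr
            exact Finset.single_le_sum (fun _ _ => zero_le) (Finset.mem_univ _)
        _ ≤ _ := by
            rw [← mul_assoc]
            exact mul_le_mul' le_self_add le_rfl
  · push Not at hlarge
    refine .inr (((hF u hu).measure_le_of_forall_measure_region_le hΩ hδ ht fun K =>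
      (hor K).resolve_right (hlarge K).not_ge).trans (mul_le_mul' le_add_self le_rfl))

lemma IsControlledOn.lintegral_region_univ_le {u f : E → ι → ℝ} (h : IsControlledOn p c δ M Ω u f)
    (hΩ : IsOpen Ω) (hc : 0 < c) (ht : t ∈ Ioo (c / 2) c) :
    ∫⁻ x in region Ω f Finset.univ t, ENNReal.ofReal (∑ i, |f x i| ^ p) ∂μ ≤
      ENNReal.ofReal (Fintype.card ι / c) * energy μ Ω p u f := by
  rw [energy, ← lintegral_const_mul' _ _ ENNReal.ofReal_ne_top]
  refine (setLIntegral_mono' (isOpen_region hΩ h.differentiableOn.continuousOn).measurableSet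
    fun x hx => ?_).trans (lintegral_mono_set region_subset)
  rw [← ENNReal.ofReal_mul (by positivity), div_mul_eq_mul_div, mul_div_assoc, ← nsmul_eq_mul]
  refine ENNReal.ofReal_le_ofReal ?_
  refine Finset.sum_le_card_nsmul _ _ _ fun i _ => (le_div_iff₀' hc).2 ?_
  exact h.mul_abs_rpow_le_energyDensity hc ht hx (Finset.mem_univ i)

theorem NoDegenerateSequence.exists_lintegral_le_mul_energy
    (hU : NoDegenerateSequence μ Ω p U F) (hF : ∀ u ∈ U, IsControlledOn p c δ M Ω u (F u))
    (hΩ : IsOpen Ω) (hμΩ : μ Ω ≠ ∞) (hp : 0 ≤ p) (hc : 0 < c) (hδ : 0 < δ) (hM : 0 ≤ M)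
    (hC : C ≠ ∞)
    (hregion : ∀ u ∈ U, ∀ K, ∃ t ∈ Ioo (c / 2) c,
      μ (region Ω (F u) K t) ≤ C * energy μ Ω p u (F u) ∨
        μ (Ω \ region Ω (F u) K t) ≤ C * energy μ Ω p u (F u)) :
    ∃ C' : ℝ≥0∞, C' ≠ ∞ ∧ ∀ u ∈ U,
      ∫⁻ x in Ω, ENNReal.ofReal (∑ i, |F u x i| ^ p) ∂μ ≤ C' * energy μ Ω p u (F u) := by
  obtain ⟨D, hD, hor⟩ := hU.exists_measure_sdiff_region_le_or hF hΩ.measurableSet hμΩ hp hc hδ hM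
    hC hregion
  refine ⟨ENNReal.ofReal (Fintype.card ι / c) + ENNReal.ofReal M * (C + 1) +
    ENNReal.ofReal M * (D + 1), by finiteness, fun u hu => ?_⟩
  rcases hor u hu with ⟨t, ht, hle⟩ | hle
  · have hS := (isOpen_region (K := Finset.univ) (t := t) hΩ
      (hF u hu).differentiableOn.continuousOn).measurableSet
    calc ∫⁻ x in Ω, ENNReal.ofReal (∑ i, |F u x i| ^ p) ∂μ
        = ∫⁻ x in region Ω (F u) Finset.univ t, ENNReal.ofReal (∑ i, |F u x i| ^ p) ∂μ +
            ∫⁻ x in Ω \ region Ω (F u) Finset.univ t, ENNReal.ofReal (∑ i, |F u x i| ^ p) ∂μ := by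
          rw [← lintegral_inter_add_sdiff _ _ hS, inter_eq_right.2 region_subset]
      _ ≤ ENNReal.ofReal (Fintype.card ι / c) * energy μ Ω p u (F u) + ENNReal.ofReal M *
            (C * energy μ Ω p u (F u) + energy μ Ω p u (F u)) := by
          grw [(hF u hu).lintegral_region_univ_le hΩ hc ht,
            (hF u hu).lintegral_le sdiff_subset (hΩ.measurableSet.diff hS) hM, hle]
      _ = (ENNReal.ofReal (Fintype.card ι / c) + ENNReal.ofReal M * (C + 1)) *
            energy μ Ω p u (F u) := by ring
      _ ≤ _ := mul_le_mul' le_self_add le_rfl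
  · calc ∫⁻ x in Ω, ENNReal.ofReal (∑ i, |F u x i| ^ p) ∂μ
        ≤ ENNReal.ofReal M * (D * energy μ Ω p u (F u) + energy μ Ω p u (F u)) := by
          grw [(hF u hu).lintegral_le subset_rfl hΩ.measurableSet hM, hle]
      _ = ENNReal.ofReal M * (D + 1) * energy μ Ω p u (F u) := by ring
      _ ≤ _ := mul_le_mul' le_add_self le_rfl

end Separation

/-! ### The inequality -/

/-- The isoperimetric inequality implies Cheeger's because
`μ S = μ S ^ ((d - 1) / d) * μ S ^ (1 / d)` and `μ S ≤ μ Ω`. -/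
lemma exists_cheegerInequality_of_isoperimetric {E : Type*} [NormedAddCommGroup E]
    [NormedSpace ℝ E] [FiniteDimensional ℝ E] [Nontrivial E] [MeasurableSpace E] [BorelSpace E]
    {μ : Measure E} {Ω : Set E} (hμΩ : μ Ω ≠ ∞)
    (hiso : ∃ c : ℝ, 0 < c ∧ ∀ S ⊆ Ω, MeasurableSet S → μ S ≤ μ Ω / 2 →
      ENNReal.ofReal c * μ S ^ (((finrank ℝ E : ℝ) - 1) / finrank ℝ E) ≤
        μH[(finrank ℝ E : ℝ) - 1] (Ω ∩ frontier S)) :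
    ∃ C : ℝ≥0∞, C ≠ ∞ ∧ CheegerInequality μ Ω C := by
  obtain ⟨c, hc, hiso⟩ := hiso
  have hd : (1 : ℝ) ≤ finrank ℝ E := by exact_mod_cast (finrank_pos : 0 < finrank ℝ E)
  have hd0 : (finrank ℝ E : ℝ) ≠ 0 := (zero_lt_one.trans_le hd).ne'
  have hc0 : ENNReal.ofReal c ≠ 0 := by simpa using hc
  refine ⟨(ENNReal.ofReal c)⁻¹ * μ Ω ^ (1 / finrank ℝ E : ℝ), ?_, fun S hSΩ hS hle => ?_⟩
  · have : μ Ω ^ (1 / finrank ℝ E : ℝ) ≠ ∞ := ENNReal.rpow_ne_top_of_nonneg (by positivity) hμΩ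
    finiteness
  calc μ S
      = μ S ^ (1 / finrank ℝ E : ℝ) * μ S ^ (((finrank ℝ E : ℝ) - 1) / finrank ℝ E) := by
        rw [← ENNReal.rpow_add_of_nonneg _ _ (by positivity)
          (div_nonneg (sub_nonneg.2 hd) (zero_le_one.trans hd)), ← add_div, add_sub_cancel,
          div_self hd0, ENNReal.rpow_one]
    _ ≤ μ Ω ^ (1 / finrank ℝ E : ℝ) *
          ((ENNReal.ofReal c)⁻¹ * μH[(finrank ℝ E : ℝ) - 1] (Ω ∩ frontier S)) := by
        gcongr
        exact (ENNReal.mul_le_iff_le_inv hc0 ENNReal.ofReal_ne_top).1 (hiso S hSΩ hS hle)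
    _ = _ := by ring

lemma norm_gradient_eq_norm_fderiv {E : Type*} [NormedAddCommGroup E] [InnerProductSpace ℝ E]
    [CompleteSpace E] (f : E → ℝ) (x : E) : ‖gradient f x‖ = ‖fderiv ℝ f x‖ :=
  LinearIsometryEquiv.norm_map _ _

theorem poincare_beckner_general {E : Type*} [NormedAddCommGroup E] [NormedSpace ℝ E]
    [FiniteDimensional ℝ E] [Nontrivial E] [MeasurableSpace E] [BorelSpace E] {μ : Measure E}
    [μ.IsAddHaarMeasure] {N : ℕ} {p κ : ℝ} (hp : 1 ≤ p) (hκ : 0 < κ) {Ω : Set E} (hΩ : IsOpen Ω)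
    (hμΩ : μ Ω ≠ ∞) (hiso : ∃ C : ℝ≥0∞, C ≠ ∞ ∧ CheegerInequality μ Ω C)
    {A : E → Matrix (Fin N) (Fin N) ℝ} {m : E → Fin N → ℝ}
    (hadm : ∀ x ∈ Ω, IsAdmissible κ (A x) (m x)) {U : Set (E → Fin N → ℝ)}
    (hUc : ∀ u ∈ U, ContinuousOn u Ω)
    (hUd : ∀ u ∈ U, DifferentiableOn ℝ (fun x => fComp (A x) (m x) (u x)) Ω)
    (hU0 : ∀ u ∈ U, ∀ x ∈ Ω, 0 ≤ u x)
    (hUsep : NoDegenerateSequence μ Ω p U fun u x => fComp (A x) (m x) (u x)) :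
    ∃ C : ℝ, 0 < C ∧ ∀ u ∈ U,
      ∫⁻ x in Ω, ENNReal.ofReal (∑ i, |fComp (A x) (m x) (u x) i| ^ p) ∂μ ≤
        ENNReal.ofReal C * energy μ Ω p u fun x => fComp (A x) (m x) (u x) := by
  have hp0 : 0 < p := zero_lt_one.trans_le hp
  obtain ⟨c, δ, M, hc, hc1, hδ, hM, hcontrolled⟩ := exists_isControlled (N := N) hκ hp0
  have hF (u) (hu : u ∈ U) : IsControlledOn p c δ M Ω u fun x => fComp (A x) (m x) (u x) :=
    ⟨hUc u hu, hUd u hu, fun x hx => hcontrolled _ _ _ (hadm x hx) (hU0 u hu x hx)⟩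
  obtain ⟨CΩ, hCΩ, hiso⟩ := hiso
  obtain ⟨C₁, hC₁, hregion⟩ := hiso.exists_measure_region_le (ι := Fin N) hCΩ hΩ hμΩ hp hc hc1
  obtain ⟨C, hC, hle⟩ := hUsep.exists_lintegral_le_mul_energy hF hΩ hμΩ hp0.le hc hδ hM hC₁
    fun u hu => hregion u _ (hF u hu)
  refine ⟨C.toReal + 1, by positivity, fun u hu => (hle u hu).trans ?_⟩
  gcongr
  exact (ENNReal.ofReal_toReal hC).symm.trans_le (ENNReal.ofReal_le_ofReal (by linarith))

/-- The vectorial Poincaré–Beckner inequality (Theorem 1). Let `Ω ⊂ ℝ^d` be a bounded,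
connected, open set admitting the relative isoperimetric inequality, let `(a, m)` be an
admissible pair of `C¹` coefficients with constant `κ`, `p ≥ 1`, and let `U` be a set of
nonnegative `C¹` functions such that no `L^p`-bounded sequence in `U` admits a nonempty
index set `I` with `u_{in} → 0` in measure for `i ∈ I` and `f_{in} → 0` in measure for
`i ∉ I`. Then there is `C > 0` with
`∫_Ω Σ_i |f_i|^p ≤ C ∫_Ω Σ_i u_i (|f_i|^p + |∇f_i|^p)` for all `u ∈ U`. -/
theorem poincare_beckner {d N : ℕ} (hd : 0 < d) (hN : 0 < N) (p κ : ℝ)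
    (hp : 1 ≤ p) (hκ : 0 < κ)
    (Ω : Set (EuclideanSpace ℝ (Fin d)))
    (hΩo : IsOpen Ω) (hΩb : Bornology.IsBounded Ω) (hΩc : IsConnected Ω)
    (hiso : ∃ c : ℝ, 0 < c ∧ ∀ S : Set (EuclideanSpace ℝ (Fin d)), S ⊆ Ω →
      MeasurableSet S → volume S ≤ volume Ω / 2 →
      ENNReal.ofReal c * volume S ^ (((d : ℝ) - 1) / d) ≤ μH[(d : ℝ) - 1] (Ω ∩ frontier S))
    (a : Fin N → Fin N → EuclideanSpace ℝ (Fin d) → ℝ)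
    (m : Fin N → EuclideanSpace ℝ (Fin d) → ℝ)
    (ha : ∀ i j, ContDiffOn ℝ 1 (a i j) (closure Ω))
    (hm : ∀ i, ContDiffOn ℝ 1 (m i) (closure Ω))
    (hadm : ∀ x ∈ closure Ω, IsAdmissible κ (Matrix.of fun i j => a i j x) fun i => m i x)
    (U : Set (EuclideanSpace ℝ (Fin d) → Fin N → ℝ))
    (hUC1 : ∀ u ∈ U, ∀ i, ContDiffOn ℝ 1 (fun x => u x i) (closure Ω))
    (hU0 : ∀ u ∈ U, ∀ x ∈ Ω, ∀ i, 0 ≤ u x i)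
    (hUsep : ¬ ∃ useq : ℕ → EuclideanSpace ℝ (Fin d) → Fin N → ℝ,
      (∀ n, useq n ∈ U) ∧
      (∃ B : ℝ, ∀ n,
        ∫⁻ x in Ω, ENNReal.ofReal (∑ i, |useq n x i| ^ p) ≤ ENNReal.ofReal B) ∧
      ∃ I : Finset (Fin N), I.Nonempty ∧
        (∀ i ∈ I, TendstoInMeasure (volume.restrict Ω)
          (fun n x => useq n x i) atTop fun _ => 0) ∧
        ∀ i ∉ I, TendstoInMeasure (volume.restrict Ω)
          (fun n x => m i x - ∑ j, a i j x * useq n x j) atTop fun _ => 0) :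
    ∃ C : ℝ, 0 < C ∧ ∀ u ∈ U,
      ∫⁻ x in Ω, ENNReal.ofReal (∑ i, |m i x - ∑ j, a i j x * u x j| ^ p) ≤
        ENNReal.ofReal C * ∫⁻ x in Ω, ENNReal.ofReal (∑ i, u x i *
          (|m i x - ∑ j, a i j x * u x j| ^ p +
            ‖gradient (fun y => m i y - ∑ j, a i j y * u y j) x‖ ^ p)) := by
  have : Nontrivial (EuclideanSpace ℝ (Fin d)) :=
    nontrivial_of_finrank_pos (R := ℝ) (by rwa [finrank_euclideanSpace_fin])
  have hμΩ : volume Ω ≠ ∞ := hΩb.measure_lt_top.ne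
  have hdiff {g : EuclideanSpace ℝ (Fin d) → ℝ} (hg : ContDiffOn ℝ 1 g (closure Ω)) :
      DifferentiableOn ℝ g Ω :=
    (hg.differentiableOn one_ne_zero).mono subset_closure
  simp only [norm_gradient_eq_norm_fderiv]
  exact poincare_beckner_general hp hκ hΩo hμΩ
    (exists_cheegerInequality_of_isoperimetric hμΩ (by rwa [finrank_euclideanSpace_fin]))
    (fun x hx => hadm x (subset_closure hx))
    (fun u hu => continuousOn_pi.2 fun i => (hdiff (hUC1 u hu i)).continuousOn)
    (fun u hu => differentiableOn_pi.2 fun i => (hdiff (hm i)).sub <|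
      DifferentiableOn.fun_sum fun j _ => (hdiff (ha i j)).mul (hdiff (hUC1 u hu j)))
    hU0 hUsep
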